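/- arXiv:2302.05946 — 2 statements merged into one kernel-verified Lean document; each statement's English description precedes it below -/
import Mathlib

section
/- There exists a constant C_K > 0, depending only on the number field K, such that in the number-field distortion setup, for every collection A as above, every choice of parameters δ_1, …, δ_J ∈ [0,1/2], and every 1 ≤ j ≤ J, one has M_j^{(2)} ≤ C_K · s² · (log N(p_j))^6 / N(p_j)². -/
/-!
A modulus whose largest prime is `p_j` is `m * p_j ^ e` with `e ≥ 1` and `m` composed of smaller
primes, so `α_j(x)` is at most the sum of `N(p_j) ^ (-e_i)` over the classes `a_i + I_i` of level
`j` with `x ∈ a_i + m_i`. Squaring turns `M_j^{(2)}` into a sum over pairs of such classes of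
`P_{j-1}`-masses of `(a_i + m_i) ∩ (a_{i'} + m_{i'})`, a class modulo `lcm(m_i, m_{i'})` or empty.

A distortion step at most doubles the weights and preserves the mass of every union of fibres, so
a class modulo `∏ p_k ^ f_k` has mass at most `∏_{f_k ≥ 1} 2 / N(p_k) ^ f_k`. Each modulus occurs at
most `s` times. Hence the sum over pairs is at most `s ^ 2` times a product over the primes, with a
factor `O(1 / N(p_j) ^ 2)` at `p_j` and a factor `1 + 6 / N(p) + O(1 / N(p) ^ 2)` at every smaller
prime `p`.

That product is `O((log N(p_j)) ^ 6)` because `∑_{N(p) ≤ x} 1 / N(p) ≤ log log x + O(1)`. This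
follows from the linear growth of the number of ideals of norm at most `x`, by comparing the sum
with the logarithm of the Euler product at `σ = 1 + log 2 / log x`.
-/

set_option maxHeartbeats 1000000
set_option synthInstance.maxHeartbeats 1000000

open scoped Classical
open NumberField

/-- `p` is the unique prime ideal factor of `I` of largest norm. -/
def IsPmin {K : Type*} [Field K] [NumberField K] (I p : Ideal (𝓞 K)) : Prop :=
  p.IsPrime ∧ p ∣ I ∧ ∀ q : Ideal (𝓞 K), q.IsPrime → q ∣ I → q ≠ p →
    Ideal.absNorm q < Ideal.absNorm p

/-- A nonzero proper ideal is distinguishable if it has a unique prime factor of largest norm. -/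
def Distinguishable {K : Type*} [Field K] [NumberField K] (I : Ideal (𝓞 K)) : Prop :=
  I ≠ ⊥ ∧ I ≠ ⊤ ∧ ∃ p : Ideal (𝓞 K), IsPmin I p

/-! ### Counting ideals by norm -/

section IdealCounting

open Finset

theorem absNorm_pos {R : Type*} [CommRing R] [IsDedekindDomain R] [Module.Free ℤ R]
    [Module.Finite ℤ R] {I : Ideal R} (hI : I ≠ ⊥) : 0 < Ideal.absNorm I :=
  Nat.pos_of_ne_zero (mt Ideal.absNorm_eq_zero_iff.1 hI)

theorem two_le_absNorm_of_prime {R : Type*} [CommRing R] [IsDedekindDomain R] [Module.Free ℤ R]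
    [Module.Finite ℤ R] {p : Ideal R} (hp : Prime p) : 2 ≤ Ideal.absNorm p := by
  have hpos := absNorm_pos hp.ne_zero
  have hne : Ideal.absNorm p ≠ 1 := fun h =>
    hp.not_isUnit (Ideal.isUnit_iff.2 (Ideal.absNorm_eq_one_iff.1 h))
  omega

variable (K : Type*) [Field K] [NumberField K]

/-- The finite set of nonzero ideals of `𝓞 K` of norm at most `n`. -/
noncomputable def idealsNormLE (n : ℕ) : Finset (Ideal (𝓞 K)) :=
  (Ideal.finite_setOfPred_absNorm_le (S := 𝓞 K) n).toFinset.erase ⊥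

/-- The finite set of nonzero prime ideals of `𝓞 K` of norm at most `n`. -/
noncomputable def primesNormLE (n : ℕ) : Finset (Ideal (𝓞 K)) :=
  {p ∈ idealsNormLE K n | Prime p}

variable {K} in
theorem mem_idealsNormLE {n : ℕ} {I : Ideal (𝓞 K)} :
    I ∈ idealsNormLE K n ↔ I ≠ ⊥ ∧ Ideal.absNorm I ≤ n := by
  simp [idealsNormLE]

variable {K} in
theorem mem_primesNormLE {n : ℕ} {p : Ideal (𝓞 K)} :
    p ∈ primesNormLE K n ↔ Prime p ∧ Ideal.absNorm p ≤ n := by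
  rw [primesNormLE, mem_filter, mem_idealsNormLE]
  exact ⟨fun h => ⟨h.2, h.1.2⟩, fun h => ⟨⟨h.1.ne_zero, h.2⟩, h.1⟩⟩

theorem card_idealsNormLE_zero : #(idealsNormLE K 0) = 0 := by
  refine card_eq_zero.2 (eq_empty_of_forall_notMem fun I hI => ?_)
  obtain ⟨hI0, hI⟩ := mem_idealsNormLE.1 hI
  exact (absNorm_pos hI0).ne' (Nat.le_zero.1 hI)

theorem card_idealsNormLE_pos {n : ℕ} (hn : n ≠ 0) : 0 < #(idealsNormLE K n) :=
  card_pos.2 ⟨⊤, mem_idealsNormLE.2 ⟨top_ne_bot, by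
    rw [Ideal.absNorm_top]; exact Nat.one_le_iff_ne_zero.2 hn⟩⟩

theorem tendsto_card_idealsNormLE_div :
    Filter.Tendsto (fun n : ℕ => (#(idealsNormLE K n) : ℝ) / n) Filter.atTop
      (nhds (dedekindZeta_residue K)) := by
  refine ((Ideal.tendsto_norm_le_div_atTop₀ K).comp tendsto_natCast_atTop_atTop).congr fun n => ?_
  have hcard : Nat.card {I : nonZeroDivisors (Ideal (𝓞 K)) // Ideal.absNorm I.1 ≤ n} =
      #(idealsNormLE K n) := by
    rw [Nat.card_congr (Equiv.subtypeSubtypeEquivSubtypeInter _ fun I => Ideal.absNorm I ≤ n)]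
    exact Nat.subtype_card _ fun I => by simp [mem_idealsNormLE]
  simp [hcard]

theorem exists_card_idealsNormLE_le :
    ∃ C : ℝ, 0 < C ∧ ∀ n : ℕ, (#(idealsNormLE K n) : ℝ) ≤ C * n := by
  obtain ⟨C, hC⟩ := (tendsto_card_idealsNormLE_div K).bddAbove_range
  have hC' : ∀ n : ℕ, (#(idealsNormLE K n) : ℝ) / n ≤ max C 1 := fun n =>
    (hC (Set.mem_range_self n)).trans (le_max_left _ _)
  refine ⟨max C 1, by positivity, fun n => ?_⟩
  rcases n.eq_zero_or_pos with rfl | hn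
  · simp [card_idealsNormLE_zero]
  · exact (div_le_iff₀ (by exact_mod_cast hn)).1 (hC' n)

theorem exists_le_card_idealsNormLE :
    ∃ C : ℝ, 0 < C ∧ ∀ n : ℕ, (n : ℝ) ≤ C * #(idealsNormLE K n) := by
  obtain ⟨C, hC⟩ :=
    ((tendsto_card_idealsNormLE_div K).inv₀ (dedekindZeta_residue_ne_zero K)).bddAbove_range
  have hC' : ∀ n : ℕ, (n : ℝ) / #(idealsNormLE K n) ≤ max C 1 := fun n =>
    (inv_div _ (n : ℝ)).symm.trans_le ((hC (Set.mem_range_self n)).trans (le_max_left _ _))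
  refine ⟨max C 1, by positivity, fun n => ?_⟩
  rcases eq_or_ne n 0 with rfl | hn
  · simp [card_idealsNormLE_zero]
  · exact (div_le_iff₀ (by exact_mod_cast card_idealsNormLE_pos K hn)).1 (hC' n)

theorem card_idealsNormLE_div_le {n : ℕ} {p : Ideal (𝓞 K)} (hp : p ≠ ⊥) :
    #(idealsNormLE K (n / Ideal.absNorm p)) ≤ #{I ∈ idealsNormLE K n | p ∣ I} := by
  refine card_le_card_of_injOn (p * ·) (fun I hI => ?_) (mul_right_injective₀ hp).injOn
  obtain ⟨hI0, hI⟩ := mem_idealsNormLE.1 hI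
  refine mem_filter.2 ⟨mem_idealsNormLE.2 ⟨mul_ne_zero hp hI0, ?_⟩, dvd_mul_right p I⟩
  rw [map_mul, mul_comm]
  exact (Nat.le_div_iff_mul_le (absNorm_pos hp)).1 hI

end IdealCounting

section PrimeSums

open Finset

theorem sum_log_absNorm_le_log_absNorm {R : Type*} [CommRing R] [IsDedekindDomain R]
    [Module.Free ℤ R] [Module.Finite ℤ R] {I : Ideal R} (hI : I ≠ ⊥) {S : Finset (Ideal R)}
    (hS : ∀ p ∈ S, Prime p) (hdvd : ∀ p ∈ S, p ∣ I) :
    ∑ p ∈ S, Real.log (Ideal.absNorm p) ≤ Real.log (Ideal.absNorm I) := by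
  have hpos : ∀ p ∈ S, (0 : ℝ) < Ideal.absNorm p := fun p hp => by
    exact_mod_cast absNorm_pos (hS p hp).ne_zero
  have hprod : ∏ p ∈ S, Ideal.absNorm p ≤ Ideal.absNorm I := by
    rw [← map_prod]
    exact Nat.le_of_dvd (absNorm_pos hI) (map_dvd _ (prod_primes_dvd I hS hdvd))
  rw [← Real.log_prod fun p hp => (hpos p hp).ne']
  exact Real.log_le_log (prod_pos hpos) (by exact_mod_cast hprod)

theorem div_le_two_mul_natDiv {m n : ℕ} (hm : 0 < m) (hmn : m ≤ n) :
    (n : ℝ) / m ≤ 2 * (n / m : ℕ) := by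
  have hone : (1 : ℝ) ≤ (n / m : ℕ) := by exact_mod_cast (Nat.one_le_div_iff hm).2 hmn
  have hfloor : (n : ℝ) / m < ⌊(n : ℝ) / m⌋₊ + 1 := Nat.lt_floor_add_one _
  rw [Nat.floor_div_eq_div] at hfloor
  linarith

variable (K : Type*) [Field K] [NumberField K]

theorem sum_log_mul_card_dvd_le (n : ℕ) :
    ∑ p ∈ primesNormLE K n, Real.log (Ideal.absNorm p) * #{I ∈ idealsNormLE K n | p ∣ I} ≤
      #(idealsNormLE K n) * Real.log n := by
  calc ∑ p ∈ primesNormLE K n, Real.log (Ideal.absNorm p) * #{I ∈ idealsNormLE K n | p ∣ I}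
      = ∑ I ∈ idealsNormLE K n, ∑ p ∈ primesNormLE K n with p ∣ I,
          Real.log (Ideal.absNorm p) := by
        simp_rw [sum_filter]
        rw [sum_comm]
        simp_rw [← sum_filter, sum_const, nsmul_eq_mul, mul_comm]
    _ ≤ ∑ _ ∈ idealsNormLE K n, Real.log n := by
        refine sum_le_sum fun I hI => ?_
        obtain ⟨hI0, hIn⟩ := mem_idealsNormLE.1 hI
        refine (sum_log_absNorm_le_log_absNorm hI0
          (fun p hp => (mem_primesNormLE.1 (mem_filter.1 hp).1).1)
          fun p hp => (mem_filter.1 hp).2).trans ?_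
        exact Real.log_le_log (by exact_mod_cast absNorm_pos hI0) (by exact_mod_cast hIn)
    _ = _ := by rw [sum_const, nsmul_eq_mul]

theorem exists_sum_log_absNorm_div_le :
    ∃ A : ℝ, 0 < A ∧ ∀ n : ℕ,
      ∑ p ∈ primesNormLE K n, Real.log (Ideal.absNorm p) / Ideal.absNorm p ≤ A * Real.log n := by
  obtain ⟨C, hC, hle⟩ := exists_card_idealsNormLE_le K
  obtain ⟨C', hC', hge⟩ := exists_le_card_idealsNormLE K
  refine ⟨2 * C' * C, by positivity, fun n => ?_⟩
  rcases n.eq_zero_or_pos with rfl | hn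
  · simp [primesNormLE, card_eq_zero.1 (card_idealsNormLE_zero K)]
  have hn' : (0 : ℝ) < n := by exact_mod_cast hn
  have hmultiples : ∀ p ∈ primesNormLE K n,
      (n : ℝ) / Ideal.absNorm p ≤ 2 * C' * #{I ∈ idealsNormLE K n | p ∣ I} := by
    intro p hp
    obtain ⟨hp, hpn⟩ := mem_primesNormLE.1 hp
    calc (n : ℝ) / Ideal.absNorm p ≤ 2 * (n / Ideal.absNorm p : ℕ) :=
          div_le_two_mul_natDiv (absNorm_pos hp.ne_zero) hpn
      _ ≤ 2 * (C' * #{I ∈ idealsNormLE K n | p ∣ I}) := by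
          gcongr
          refine (hge _).trans (mul_le_mul_of_nonneg_left ?_ hC'.le)
          exact_mod_cast card_idealsNormLE_div_le K hp.ne_zero
      _ = _ := (mul_assoc _ _ _).symm
  refine le_of_mul_le_mul_left ?_ hn'
  calc (n : ℝ) * ∑ p ∈ primesNormLE K n, Real.log (Ideal.absNorm p) / Ideal.absNorm p
      = ∑ p ∈ primesNormLE K n, Real.log (Ideal.absNorm p) * (n / Ideal.absNorm p) := by
        rw [mul_sum]
        exact sum_congr rfl fun p _ => by ring
    _ ≤ ∑ p ∈ primesNormLE K n, Real.log (Ideal.absNorm p) *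
          (2 * C' * #{I ∈ idealsNormLE K n | p ∣ I}) :=
        sum_le_sum fun p hp =>
          mul_le_mul_of_nonneg_left (hmultiples p hp) (Real.log_natCast_nonneg _)
    _ = 2 * C' * ∑ p ∈ primesNormLE K n,
          Real.log (Ideal.absNorm p) * #{I ∈ idealsNormLE K n | p ∣ I} := by
        rw [mul_sum]
        exact sum_congr rfl fun p _ => by ring
    _ ≤ 2 * C' * (C * n * Real.log n) := by
        gcongr
        exact (sum_log_mul_card_dvd_le K n).trans (by gcongr; exact hle n)
    _ = n * (2 * C' * C * Real.log n) := by ring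

end PrimeSums

section RankinShift

open Finset

/- Partial summation, by induction on `X` with the boundary term kept on the left. -/
theorem sum_filter_add_mul_le_of_card_le {ι : Type*} (T : Finset ι) (N : ι → ℕ) {φ : ℕ → ℝ}
    (hφ : AntitoneOn φ (Set.Ici 1)) {C : ℝ} (hcard : ∀ n : ℕ, (#{i ∈ T | N i ≤ n} : ℝ) ≤ C * n)
    (X : ℕ) :
    ∑ i ∈ T with N i ≤ X, φ (N i) + (C * X - #{i ∈ T | N i ≤ X}) * φ X ≤
      C * ∑ n ∈ Icc 1 X, φ n := by
  have hempty : ({i ∈ T | N i ≤ 0} : Finset ι) = ∅ := by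
    have h0 := hcard 0
    rw [Nat.cast_zero, mul_zero] at h0
    exact card_eq_zero.1 (by exact_mod_cast h0.antisymm (by positivity))
  induction X with
  | zero => rw [hempty]; simp
  | succ X ih =>
    have hsplit : ({i ∈ T | N i ≤ X + 1} : Finset ι) =
        {i ∈ T | N i ≤ X}.disjUnion {i ∈ T | N i = X + 1}
          (disjoint_filter.2 fun _ _ h h' => by omega) := by
      ext i
      simp only [mem_disjUnion, mem_filter, Nat.le_succ_iff, and_or_left]
    have htop : ∑ i ∈ T with N i = X + 1, φ (N i) = #{i ∈ T | N i = X + 1} * φ (X + 1) := by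
      rw [sum_congr rfl fun i hi => by rw [(mem_filter.1 hi).2], sum_const, nsmul_eq_mul]
    have hboundary : (C * X - #{i ∈ T | N i ≤ X}) * φ (X + 1) ≤
        (C * X - #{i ∈ T | N i ≤ X}) * φ X := by
      rcases X.eq_zero_or_pos with rfl | hX
      · rw [hempty]; simp
      · exact mul_le_mul_of_nonneg_left (hφ hX (Nat.le_add_left 1 X) X.le_succ)
          (sub_nonneg.2 (hcard X))
    rw [hsplit, sum_disjUnion, card_disjUnion, sum_Icc_succ_top (by omega), htop]
    push_cast
    linarith

theorem sum_comp_le_of_card_le {ι : Type*} (T : Finset ι) (N : ι → ℕ) {φ : ℕ → ℝ}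
    (hφ : AntitoneOn φ (Set.Ici 1)) (hφ0 : ∀ n, 0 ≤ φ n) {C : ℝ}
    (hcard : ∀ n : ℕ, (#{i ∈ T | N i ≤ n} : ℝ) ≤ C * n) :
    ∑ i ∈ T, φ (N i) ≤ C * ∑ n ∈ Icc 1 (T.sup N), φ n := by
  have hle := sum_filter_add_mul_le_of_card_le T N hφ hcard (T.sup N)
  rw [filter_true_of_mem fun i hi => le_sup hi] at hle
  have hnonneg : 0 ≤ (C * (T.sup N : ℕ) - #T) * φ (T.sup N) := by
    refine mul_nonneg (sub_nonneg.2 ?_) (hφ0 _)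
    have htop := hcard (T.sup N)
    rwa [filter_true_of_mem fun i hi => le_sup hi] at htop
  linarith

theorem antitoneOn_natCast_rpow_neg {σ : ℝ} (hσ : 0 ≤ σ) :
    AntitoneOn (fun n : ℕ => (n : ℝ) ^ (-σ)) (Set.Ici 1) := fun m hm n _ hmn =>
  Real.rpow_le_rpow_of_nonpos (by exact_mod_cast hm) (by exact_mod_cast hmn) (neg_nonpos.2 hσ)

theorem sum_Icc_rpow_neg_le {σ : ℝ} (hσ : 1 < σ) (X : ℕ) :
    ∑ n ∈ Icc 1 X, (n : ℝ) ^ (-σ) ≤ σ / (σ - 1) := by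
  have hσ' : 0 < σ - 1 := by linarith
  rcases X with _ | X
  · simpa using div_nonneg (by linarith) hσ'.le
  have hanti : AntitoneOn (fun x : ℝ => x ^ (-σ)) (Set.Icc 1 (1 + (X : ℝ))) := fun x hx y _ hxy =>
    Real.rpow_le_rpow_of_nonpos (by linarith [hx.1]) hxy (by linarith)
  have hintegral : ∫ x in (1 : ℝ)..1 + X, x ^ (-σ) ≤ 1 / (σ - 1) := by
    rw [integral_rpow (Or.inr ⟨by linarith, Set.notMem_uIcc_of_lt one_pos (by positivity)⟩),
      Real.one_rpow, ← neg_div_neg_eq]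
    have hpow : 0 ≤ (1 + (X : ℝ)) ^ (-σ + 1) := by positivity
    have hneg : -(-σ + 1) = σ - 1 := by ring
    rw [hneg]
    gcongr
    linarith
  calc ∑ n ∈ Icc 1 (X + 1), (n : ℝ) ^ (-σ)
      = 1 + ∑ i ∈ range X, (1 + ((i + 1 : ℕ) : ℝ)) ^ (-σ) := by
        rw [← Ico_add_one_right_eq_Icc, sum_Ico_eq_sum_range, Nat.add_sub_cancel, sum_range_succ',
          add_comm]
        simp
    _ ≤ 1 + 1 / (σ - 1) := by
        gcongr
        exact hanti.sum_le_integral.trans hintegral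
    _ = σ / (σ - 1) := by
        field_simp
        ring

variable (K : Type*) [Field K] [NumberField K]

theorem exists_sum_absNorm_rpow_neg_le :
    ∃ A : ℝ, 0 < A ∧ ∀ σ : ℝ, 1 < σ → σ ≤ 2 → ∀ T : Finset (Ideal (𝓞 K)), ⊥ ∉ T →
      ∑ I ∈ T, (Ideal.absNorm I : ℝ) ^ (-σ) ≤ A / (σ - 1) := by
  obtain ⟨C, hC, hcard⟩ := exists_card_idealsNormLE_le K
  refine ⟨2 * C, by positivity, fun σ hσ hσ2 T hT => ?_⟩
  have hcount : ∀ n : ℕ, (#{I ∈ T | Ideal.absNorm I ≤ n} : ℝ) ≤ C * n := fun n => by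
    refine le_trans ?_ (hcard n)
    exact_mod_cast card_le_card fun I hI => mem_idealsNormLE.2
      ⟨ne_of_mem_of_not_mem (mem_filter.1 hI).1 hT, (mem_filter.1 hI).2⟩
  calc ∑ I ∈ T, (Ideal.absNorm I : ℝ) ^ (-σ)
      ≤ C * ∑ n ∈ Icc 1 (T.sup Ideal.absNorm), (n : ℝ) ^ (-σ) :=
        sum_comp_le_of_card_le T _ (antitoneOn_natCast_rpow_neg (by linarith))
          (fun n => by positivity) hcount
    _ ≤ C * (2 / (σ - 1)) := by
        gcongr
        refine (sum_Icc_rpow_neg_le hσ _).trans ?_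
        have : 0 < σ - 1 := by linarith
        gcongr
    _ = 2 * C / (σ - 1) := by ring

end RankinShift

section Mertens

open Finset

theorem injOn_prod_powerset_of_prime {M : Type*} [CommMonoidWithZero M] [IsCancelMulZero M]
    [Subsingleton Mˣ] {S : Finset M} (hS : ∀ p ∈ S, Prime p) :
    Set.InjOn (fun T : Finset M => ∏ p ∈ T, p) S.powerset := by
  have hsub : ∀ T ∈ S.powerset, ∀ T' ∈ S.powerset, ∏ p ∈ T, p ∣ ∏ p ∈ T', p → T ⊆ T' := by
    intro T hT T' hT' hdvd p hp
    have hpS := hS p (mem_powerset.1 hT hp)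
    obtain ⟨q, hq, hpq⟩ := (hpS.dvd_finsetProd_iff _).1 ((dvd_prod_of_mem id hp).trans hdvd)
    have := hpS.irreducible.associated_of_dvd (hS q (mem_powerset.1 hT' hq)).irreducible hpq
    rwa [associated_iff_eq.1 this]
  exact fun T hT T' hT' h =>
    (hsub T hT T' hT' (dvd_of_eq h)).antisymm (hsub T' hT' T hT (dvd_of_eq h.symm))

theorem sub_sq_le_log_one_add {y : ℝ} (hy : 0 ≤ y) : y - y ^ 2 ≤ Real.log (1 + y) := by
  refine le_trans ?_ (Real.le_log_one_add_of_nonneg hy)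
  rw [le_div_iff₀ (by positivity)]
  nlinarith [mul_nonneg hy (sq_nonneg y), sq_nonneg y]

variable (K : Type*) [Field K] [NumberField K]

theorem exists_prod_one_add_absNorm_rpow_neg_le :
    ∃ A : ℝ, 0 < A ∧ ∀ σ : ℝ, 1 < σ → σ ≤ 2 → ∀ S : Finset (Ideal (𝓞 K)), (∀ p ∈ S, Prime p) →
      ∏ p ∈ S, (1 + (Ideal.absNorm p : ℝ) ^ (-σ)) ≤ A / (σ - 1) := by
  obtain ⟨A, hA, hle⟩ := exists_sum_absNorm_rpow_neg_le K
  refine ⟨A, hA, fun σ hσ hσ2 S hS => ?_⟩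
  have hbot : ⊥ ∉ S.powerset.image fun T => ∏ p ∈ T, p := by
    intro h
    obtain ⟨T, hT, h0⟩ := mem_image.1 h
    exact prod_ne_zero_iff.2 (fun p hp => (hS p (mem_powerset.1 hT hp)).ne_zero) h0
  calc ∏ p ∈ S, (1 + (Ideal.absNorm p : ℝ) ^ (-σ))
      = ∑ T ∈ S.powerset, (Ideal.absNorm (∏ p ∈ T, p) : ℝ) ^ (-σ) := by
        rw [prod_one_add]
        refine sum_congr rfl fun T _ => ?_
        rw [map_prod, Nat.cast_prod, Real.finsetProd_rpow _ _ fun p _ => by positivity]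
    _ = ∑ I ∈ S.powerset.image fun T => ∏ p ∈ T, p, (Ideal.absNorm I : ℝ) ^ (-σ) :=
        (sum_image (f := fun I : Ideal (𝓞 K) => (Ideal.absNorm I : ℝ) ^ (-σ))
          (injOn_prod_powerset_of_prime hS)).symm
    _ ≤ A / (σ - 1) := hle σ hσ hσ2 _ hbot

theorem exists_sum_inv_absNorm_sq_le :
    ∃ D : ℝ, 0 < D ∧ ∀ S : Finset (Ideal (𝓞 K)), ⊥ ∉ S →
      ∑ p ∈ S, 1 / (Ideal.absNorm p : ℝ) ^ 2 ≤ D := by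
  obtain ⟨D, hD, hle⟩ := exists_sum_absNorm_rpow_neg_le K
  refine ⟨D / (2 - 1), by positivity, fun S hS => ?_⟩
  refine (sum_congr rfl fun p _ => ?_).trans_le (hle 2 one_lt_two le_rfl S hS)
  rw [Real.rpow_neg (by positivity), Real.rpow_two, one_div]

/-- The `1 / N ^ 2` pays for replacing `y` by `log (1 + y)`, the last term for the shift of the
exponent. -/
theorem inv_le_log_one_add_rpow_add {N τ : ℝ} (hN : 1 ≤ N) (hτ : 0 ≤ τ) :
    1 / N ≤ Real.log (1 + N ^ (-(1 + τ))) + 1 / N ^ 2 + τ * (Real.log N / N) := by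
  have hN0 : 0 < N := by linarith
  have hfactor : N ^ (-(1 + τ)) = 1 / N * Real.exp (-(τ * Real.log N)) := by
    rw [neg_add, Real.rpow_add hN0, Real.rpow_neg_one, one_div, Real.rpow_def_of_pos hN0]
    congr 2
    ring
  have hlower : 1 / N - τ * (Real.log N / N) ≤ N ^ (-(1 + τ)) := by
    rw [hfactor]
    have := mul_le_mul_of_nonneg_left (Real.add_one_le_exp (-(τ * Real.log N)))
      (one_div_nonneg.2 hN0.le)
    refine le_trans (le_of_eq ?_) this
    ring
  have hupper : (N ^ (-(1 + τ))) ^ 2 ≤ 1 / N ^ 2 := by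
    rw [← one_div_pow]
    gcongr
    rw [one_div, ← Real.rpow_neg_one]
    exact Real.rpow_le_rpow_of_exponent_le hN (by linarith)
  linarith [sub_sq_le_log_one_add (Real.rpow_nonneg hN0.le (-(1 + τ)))]

theorem exists_sum_inv_absNorm_le_log_log :
    ∃ C : ℝ, ∀ n : ℕ, 2 ≤ n →
      ∑ p ∈ primesNormLE K n, 1 / (Ideal.absNorm p : ℝ) ≤ Real.log (Real.log n) + C := by
  obtain ⟨A, hA, hprod⟩ := exists_prod_one_add_absNorm_rpow_neg_le K
  obtain ⟨A', -, hlog⟩ := exists_sum_log_absNorm_div_le K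
  obtain ⟨D, -, hsq⟩ := exists_sum_inv_absNorm_sq_le K
  refine ⟨Real.log (A / Real.log 2) + D + Real.log 2 * A', fun n hn => ?_⟩
  have hlog2 : 0 < Real.log 2 := Real.log_pos one_lt_two
  have hlogn : Real.log 2 ≤ Real.log n := Real.log_le_log two_pos (by exact_mod_cast hn)
  have hlogn0 : 0 < Real.log n := hlog2.trans_le hlogn
  have hprime : ∀ p ∈ primesNormLE K n, Prime p := fun p hp => (mem_primesNormLE.1 hp).1
  set τ : ℝ := Real.log 2 / Real.log n with hτ
  have hτ0 : 0 < τ := by positivity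
  have hτ1 : τ ≤ 1 := (div_le_one hlogn0).2 hlogn
  have hmain : ∑ p ∈ primesNormLE K n, Real.log (1 + (Ideal.absNorm p : ℝ) ^ (-(1 + τ))) ≤
      Real.log (A / Real.log 2) + Real.log (Real.log n) := by
    rw [← Real.log_prod fun p _ => by positivity, ← Real.log_mul (by positivity) (by positivity)]
    refine Real.log_le_log (prod_pos fun p _ => by positivity) ?_
    refine (hprod (1 + τ) (by linarith) (by linarith) _ hprime).trans (le_of_eq ?_)
    rw [hτ, add_sub_cancel_left]
    field_simp
  have hshift : τ * ∑ p ∈ primesNormLE K n, Real.log (Ideal.absNorm p) / Ideal.absNorm p ≤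
      Real.log 2 * A' := by
    refine (mul_le_mul_of_nonneg_left (hlog n) hτ0.le).trans (le_of_eq ?_)
    rw [hτ]
    field_simp
  have hsquares := hsq (primesNormLE K n) fun h => (hprime _ h).ne_zero rfl
  have hterms := sum_le_sum fun p hp => inv_le_log_one_add_rpow_add (τ := τ) (N := Ideal.absNorm p)
    (by exact_mod_cast absNorm_pos (hprime p hp).ne_zero) hτ0.le
  rw [sum_add_distrib, sum_add_distrib, ← mul_sum] at hterms
  linarith

theorem exists_prod_exp_le_log_pow :
    ∃ C : ℝ, 0 < C ∧ ∀ n : ℕ, 2 ≤ n → ∀ S ⊆ primesNormLE K n,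
      ∏ p ∈ S, Real.exp (6 / Ideal.absNorm p + 28 / (Ideal.absNorm p : ℝ) ^ 2) ≤
        C * Real.log n ^ 6 := by
  obtain ⟨C, hmertens⟩ := exists_sum_inv_absNorm_le_log_log K
  obtain ⟨D, -, hsq⟩ := exists_sum_inv_absNorm_sq_le K
  refine ⟨Real.exp (6 * C + 28 * D), Real.exp_pos _, fun n hn S hS => ?_⟩
  have hlogn : 0 < Real.log n := Real.log_pos (by exact_mod_cast hn)
  have hinv := (sum_le_sum_of_subset_of_nonneg hS fun p _ _ =>
    (by positivity : 0 ≤ 1 / (Ideal.absNorm p : ℝ))).trans (hmertens n hn)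
  have hsquares := hsq S fun h => (mem_primesNormLE.1 (hS h)).1.ne_zero rfl
  calc ∏ p ∈ S, Real.exp (6 / Ideal.absNorm p + 28 / (Ideal.absNorm p : ℝ) ^ 2)
      = Real.exp (6 * ∑ p ∈ S, 1 / (Ideal.absNorm p : ℝ) +
          28 * ∑ p ∈ S, 1 / (Ideal.absNorm p : ℝ) ^ 2) := by
        rw [← Real.exp_sum, mul_sum, mul_sum, ← sum_add_distrib]
        simp only [mul_one_div]
    _ ≤ Real.exp ((6 * C + 28 * D) + 6 * Real.log (Real.log n)) :=
        Real.exp_le_exp.2 (by linarith)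
    _ = Real.exp (6 * C + 28 * D) * Real.log n ^ 6 := by
        rw [Real.exp_add, mul_comm 6 (Real.log _), Real.exp_mul, Real.exp_log hlogn]
        norm_cast

end Mertens

/-! ### Averages over cosets and distorted weights -/

section CosetIndicator

variable {G : Type*} [AddCommGroup G]

/-- The indicator function of the coset `b + A`. -/
noncomputable def cosetIndicator (A : AddSubgroup G) (b x : G) : ℝ :=
  if x - b ∈ A then 1 else 0

theorem cosetIndicator_nonneg (A : AddSubgroup G) (b x : G) : 0 ≤ cosetIndicator A b x := by
  unfold cosetIndicator
  positivity

theorem cosetIndicator_mono {M A : AddSubgroup G} (h : M ≤ A) (b x : G) :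
    cosetIndicator M b x ≤ cosetIndicator A b x := by
  unfold cosetIndicator
  split_ifs with hM hA
  exacts [le_rfl, absurd (h hM) hA, zero_le_one, le_rfl]

theorem cosetIndicator_periodic (A : AddSubgroup G) (b : G) {h : G} (hh : h ∈ A) :
    Function.Periodic (cosetIndicator A b) h := fun x => by
  unfold cosetIndicator
  rw [add_sub_right_comm, A.add_mem_cancel_right hh]

theorem exists_cosetIndicator_mul_le (A A' : AddSubgroup G) (b b' : G) :
    ∃ c, ∀ x, cosetIndicator A b x * cosetIndicator A' b' x ≤ cosetIndicator (A ⊓ A') c x := by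
  have hzero : ∀ x, ¬(x - b ∈ A ∧ x - b' ∈ A') →
      cosetIndicator A b x * cosetIndicator A' b' x = 0 := fun x hx => by
    simp only [cosetIndicator]
    split_ifs <;> simp_all
  by_cases hmeet : ∃ c, c - b ∈ A ∧ c - b' ∈ A'
  · obtain ⟨c, hc, hc'⟩ := hmeet
    refine ⟨c, fun x => ?_⟩
    by_cases hx : x - b ∈ A ∧ x - b' ∈ A'
    · have hxc : x - c ∈ A ⊓ A' :=
        ⟨by simpa using A.sub_mem hx.1 hc, by simpa using A'.sub_mem hx.2 hc'⟩
      simp only [cosetIndicator, if_pos hx.1, if_pos hx.2, if_pos hxc, mul_one, le_refl]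
    · exact (hzero x hx).trans_le (cosetIndicator_nonneg _ _ _)
  · exact ⟨0, fun x => (hzero x fun hx => hmeet ⟨x, hx⟩).trans_le (cosetIndicator_nonneg _ _ _)⟩

end CosetIndicator

section CosetAverage

open Finset

variable {G : Type*} [AddCommGroup G] [Fintype G]

/-- The average of `ψ` over the coset `x + H`: the conditional expectation of `ψ` on the
cosets of `H` for the uniform measure. -/
noncomputable def cosetAverage (H : AddSubgroup G) (ψ : G → ℝ) (x : G) : ℝ :=
  (∑ h : H, ψ (x + h)) / Nat.card H

theorem cosetAverage_mono (H : AddSubgroup G) {ψ ψ' : G → ℝ} (h : ∀ x, ψ x ≤ ψ' x) (x : G) :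
    cosetAverage H ψ x ≤ cosetAverage H ψ' x :=
  div_le_div_of_nonneg_right (sum_le_sum fun _ _ => h _) (Nat.cast_nonneg _)

theorem cosetAverage_nonneg (H : AddSubgroup G) {ψ : G → ℝ} (hψ : ∀ x, 0 ≤ ψ x) (x : G) :
    0 ≤ cosetAverage H ψ x :=
  div_nonneg (sum_nonneg fun _ _ => hψ _) (Nat.cast_nonneg _)

theorem cosetAverage_sum {ι : Type*} (H : AddSubgroup G) (S : Finset ι) (ψ : ι → G → ℝ) (x : G) :
    cosetAverage H (fun y => ∑ i ∈ S, ψ i y) x = ∑ i ∈ S, cosetAverage H (ψ i) x := by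
  simp only [cosetAverage, sum_comm (s := univ), sum_div]

theorem cosetAverage_periodic (H : AddSubgroup G) (ψ : G → ℝ) {h : G} (hh : h ∈ H) :
    Function.Periodic (cosetAverage H ψ) h := fun x => by
  unfold cosetAverage
  congr 1
  exact Fintype.sum_equiv (Equiv.addLeft (⟨h, hh⟩ : H)) _ _ fun k => by simp [add_assoc]

theorem sum_mul_cosetAverage (H : AddSubgroup G) {φ : G → ℝ}
    (hφ : ∀ h ∈ H, Function.Periodic φ h) (ψ : G → ℝ) :
    ∑ x, φ x * cosetAverage H ψ x = ∑ x, φ x * ψ x := by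
  have htranslate : ∀ h : H, ∑ x, φ x * ψ (x + h) = ∑ x, φ x * ψ x := fun h => by
    rw [← Equiv.sum_comp (Equiv.addRight (h : G)) fun x => φ x * ψ x]
    exact sum_congr rfl fun x _ => by rw [Equiv.coe_addRight, hφ h h.2 x]
  have hcard : (Nat.card H : ℝ) ≠ 0 := by exact_mod_cast Nat.card_pos.ne'
  calc ∑ x, φ x * cosetAverage H ψ x = (∑ h : H, ∑ x, φ x * ψ (x + h)) / Nat.card H := by
        rw [sum_comm, sum_div]
        exact sum_congr rfl fun x _ => by rw [cosetAverage, ← mul_sum, mul_div_assoc]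
    _ = ∑ x, φ x * ψ x := by
        simp only [htranslate, sum_const, card_univ, nsmul_eq_mul, ← Nat.card_eq_fintype_card]
        exact mul_div_cancel_left₀ _ hcard

theorem card_coset_inter_div_card (H : AddSubgroup G) (B : Finset G) (x : G) :
    (#((univ.filter fun x' => x' - x ∈ H) ∩ B) : ℝ) / #(univ.filter fun x' => x' - x ∈ H) =
      cosetAverage H (fun y => if y ∈ B then 1 else 0) x := by
  have hcoset : (univ.filter fun x' => x' - x ∈ H) =
      univ.map ((Function.Embedding.subtype (· ∈ H)).trans (addLeftEmbedding x)) := by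
    ext y
    simp [← eq_sub_iff_add_eq']
  rw [cosetAverage, ← filter_mem_eq_inter, natCast_card_filter, hcoset, sum_map, card_map,
    card_univ, Nat.card_eq_fintype_card]
  rfl

theorem card_coset_inter_le {H M : AddSubgroup G} {b x : G} (h₀ : H) (hh₀ : x + h₀ - b ∈ M) :
    #(univ.filter fun h : H => x + h - b ∈ M) ≤ Nat.card (M.addSubgroupOf H) := by
  rw [Nat.card_eq_fintype_card, Fintype.card_subtype]
  refine card_le_card_of_injOn (· - h₀) (fun h hh => ?_) fun h _ h' _ => sub_left_injective.eq_iff.1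
  have hsub := M.sub_mem (mem_filter.1 hh).2 hh₀
  simpa [AddSubgroup.mem_addSubgroupOf] using hsub

theorem cosetAverage_cosetIndicator_le {H M A : AddSubgroup G} (hH : H ≤ A) (hM : M ≤ A)
    (b x : G) :
    cosetAverage H (cosetIndicator M b) x ≤ cosetIndicator A b x / M.relIndex H := by
  have hsum : ∑ h : H, cosetIndicator M b (x + h) = #(univ.filter fun h : H => x + h - b ∈ M) := by
    simp only [cosetIndicator, natCast_card_filter]
  rw [cosetAverage, hsum]
  rcases eq_empty_or_nonempty (univ.filter fun h : H => x + h - b ∈ M) with hempty | ⟨h₀, hh₀⟩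
  · rw [hempty, card_empty, Nat.cast_zero, zero_div]
    exact div_nonneg (cosetIndicator_nonneg _ _ _) (Nat.cast_nonneg _)
  have hh₀ := (mem_filter.1 hh₀).2
  have hx : x - b ∈ A := by
    simpa [add_sub_right_comm, A.add_mem_cancel_right (hH h₀.2)] using hM hh₀
  have hindex : (Nat.card (M.addSubgroupOf H) : ℝ) * M.relIndex H = Nat.card H := by
    exact_mod_cast (M.addSubgroupOf H).card_mul_index
  have hpos : (0 : ℝ) < Nat.card H := by exact_mod_cast Nat.card_pos
  have hrel : (0 : ℝ) < M.relIndex H :=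
    pos_of_mul_pos_right (hindex ▸ hpos) (Nat.cast_nonneg _)
  rw [cosetIndicator, if_pos hx, div_le_div_iff₀ hpos hrel, one_mul, ← hindex]
  exact mul_le_mul_of_nonneg_right (by exact_mod_cast card_coset_inter_le h₀ hh₀) hrel.le

theorem sum_mul_cosetIndicator_le {H M A : AddSubgroup G} (hH : H ≤ A) (hM : M ≤ A) {P : G → ℝ}
    (hP0 : ∀ x, 0 ≤ P x) (hP : ∀ h ∈ H, Function.Periodic P h) (b : G) :
    ∑ x, P x * cosetIndicator M b x ≤ (∑ x, P x * cosetIndicator A b x) / M.relIndex H := by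
  rw [← sum_mul_cosetAverage H hP, sum_div]
  refine sum_le_sum fun x _ => ?_
  rw [mul_div_assoc]
  exact mul_le_mul_of_nonneg_left (cosetAverage_cosetIndicator_le hH hM b x) (hP0 x)

end CosetAverage

section Distort

open Finset

variable {G : Type*}

/-- The distortion of the weights `P`, which moves mass away from `B`, with threshold `δ` on the
conditional density `α` of `B`. The weights are unchanged where `α` vanishes. -/
noncomputable def distort (α : G → ℝ) (B : Finset G) (δ : ℝ) (P : G → ℝ) (x : G) : ℝ :=
  if α x < δ then (if x ∈ B then 0 else P x / (1 - α x))
  else if α x = 0 then P x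
  else P x * (α x - (if x ∈ B then δ else 0)) / (α x * (1 - δ))

theorem distort_mem_Icc {α : G → ℝ} {B : Finset G} {δ : ℝ} {P : G → ℝ} {x : G} (hα : 0 ≤ α x)
    (hδ : δ ∈ Set.Icc (0 : ℝ) (1 / 2)) (hP : 0 ≤ P x) :
    distort α B δ P x ∈ Set.Icc 0 (2 * P x) := by
  obtain ⟨hδ0, hδ1⟩ := hδ
  unfold distort
  split_ifs with hαδ hB hα0 hB
  · exact ⟨le_rfl, by positivity⟩
  · have hden : 0 < 1 - α x := by linarith
    refine ⟨by positivity, ?_⟩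
    rw [div_le_iff₀ hden]
    nlinarith
  · exact ⟨hP, by linarith⟩
  all_goals
    have hαpos : 0 < α x := hα.lt_of_ne' hα0
    have hden : 0 < α x * (1 - δ) := mul_pos hαpos (by linarith)
    refine ⟨div_nonneg (mul_nonneg hP (by linarith)) hden.le, ?_⟩
    rw [div_le_iff₀ hden]
    nlinarith [mul_nonneg hP hα, mul_nonneg hP hδ0]

/-- The slope of the distortion factor as an affine function of `α - 1_B`, see
`distort_eq_mul_one_add`. -/
noncomputable def distortSlope (α δ : ℝ) : ℝ :=
  if α < δ then 1 / (1 - α) else δ / (α * (1 - δ))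

theorem distort_eq_mul_one_add (α : G → ℝ) (B : Finset G) {δ : ℝ} (hδ : δ < 1) (P : G → ℝ)
    (x : G) :
    distort α B δ P x =
      P x * (1 + distortSlope (α x) δ * (α x - if x ∈ B then 1 else 0)) := by
  have hδ1 : 1 - δ ≠ 0 := by linarith
  unfold distort distortSlope
  split_ifs with hαδ hB hα0 hB hB
  · have : 1 - α x ≠ 0 := by linarith
    field_simp
    ring
  · have : 1 - α x ≠ 0 := by linarith
    field_simp
    ring
  · simp [hα0]
  · simp [hα0]
  all_goals
    field_simp
    ring

variable [AddCommGroup G]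

theorem distort_periodic {α : G → ℝ} {B : Finset G} {P : G → ℝ} {h : G}
    (hα : Function.Periodic α h) (hB : ∀ x, x + h ∈ B ↔ x ∈ B) (hP : Function.Periodic P h)
    (δ : ℝ) : Function.Periodic (distort α B δ P) h := fun x => by
  simp only [distort, hα x, hB x, hP x]

variable [Fintype G]

/-- Averaged over a coset of `H`, the factor in `distort_eq_mul_one_add` is `1`. -/
theorem sum_distort_mul {H : AddSubgroup G} {B : Finset G} {δ : ℝ} (hδ : δ < 1) {P g : G → ℝ}
    (hP : ∀ h ∈ H, Function.Periodic P h) (hg : ∀ h ∈ H, Function.Periodic g h) :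
    ∑ x, distort (cosetAverage H fun y => if y ∈ B then 1 else 0) B δ P x * g x =
      ∑ x, P x * g x := by
  set α := cosetAverage H fun y => if y ∈ B then 1 else 0 with hα
  have hφ : ∀ h ∈ H, Function.Periodic (fun x => P x * distortSlope (α x) δ * g x) h :=
    fun h hh x => by
      simp only [hP h hh x, hg h hh x, cosetAverage_periodic H _ hh x, hα]
  calc ∑ x, distort α B δ P x * g x
      = ∑ x, P x * g x + (∑ x, P x * distortSlope (α x) δ * g x * α x -
          ∑ x, P x * distortSlope (α x) δ * g x * if x ∈ B then 1 else 0) := by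
        rw [← sum_sub_distrib, ← sum_add_distrib]
        exact sum_congr rfl fun x _ => by rw [distort_eq_mul_one_add α B hδ]; ring
    _ = ∑ x, P x * g x := by rw [hα, sum_mul_cosetAverage H hφ, sub_self, add_zero]

/-- The factor by which one distortion step can change the bound for the mass of a congruence
class, if the step refines the class into `r` classes of equal size. -/
noncomputable def massWeight (r : ℕ) : ℝ := if r = 1 then 1 else 2 / r

theorem massWeight_nonneg (r : ℕ) : 0 ≤ massWeight r := by
  unfold massWeight
  positivity

/-- A step at most doubles the weights, and it preserves the mass of a union of cosets of `H`. -/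
theorem sum_distort_mul_cosetIndicator_le {H M A : AddSubgroup G} (hH : H ≤ A) (hM : M ≤ A)
    {B : Finset G} {δ : ℝ} (hδ : δ ∈ Set.Icc (0 : ℝ) (1 / 2)) {P : G → ℝ} (hP0 : ∀ x, 0 ≤ P x)
    (hP : ∀ h ∈ H, Function.Periodic P h) (b : G) :
    ∑ x, distort (cosetAverage H fun y => if y ∈ B then 1 else 0) B δ P x *
        cosetIndicator M b x ≤
      massWeight (M.relIndex H) * ∑ x, P x * cosetIndicator A b x := by
  unfold massWeight
  split_ifs with hr
  · rw [sum_distort_mul (by linarith [hδ.2]) hP fun h hh =>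
      cosetIndicator_periodic M b (AddSubgroup.relIndex_eq_one.1 hr hh), one_mul]
    exact sum_le_sum fun x _ => mul_le_mul_of_nonneg_left (cosetIndicator_mono hM b x) (hP0 x)
  · have hα0 : ∀ x, 0 ≤ cosetAverage H (fun y => if y ∈ B then 1 else 0) x :=
      cosetAverage_nonneg H fun y => by positivity
    calc _ ≤ ∑ x, 2 * P x * cosetIndicator M b x := sum_le_sum fun x _ =>
          mul_le_mul_of_nonneg_right (distort_mem_Icc (hα0 x) hδ (hP0 x)).2
            (cosetIndicator_nonneg _ _ _)
      _ = 2 * ∑ x, P x * cosetIndicator M b x := by simp only [mul_assoc, mul_sum]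
      _ ≤ 2 * ((∑ x, P x * cosetIndicator A b x) / M.relIndex H) :=
          mul_le_mul_of_nonneg_left (sum_mul_cosetIndicator_le hH hM hP0 hP b) zero_le_two
      _ = _ := by ring

end Distort

/-! ### Sums over exponent vectors -/

section EulerProduct

open Finset

theorem sum_sum_max (g : ℕ → ℝ) (n : ℕ) :
    ∑ t ∈ range n, ∑ t' ∈ range n, g (max t t') = ∑ t ∈ range n, (2 * t + 1) * g t := by
  induction n with
  | zero => simp
  | succ n ih =>
    have hinner : ∀ t ∈ range n, ∑ t' ∈ range (n + 1), g (max t t') =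
        ∑ t' ∈ range n, g (max t t') + g n := fun t ht => by
      rw [sum_range_succ, max_eq_right (mem_range.1 ht).le]
    have hlast : ∀ t' ∈ range (n + 1), g (max n t') = g n := fun t' ht' => by
      rw [max_eq_left (Nat.lt_succ_iff.1 (mem_range.1 ht'))]
    rw [sum_range_succ, sum_congr rfl hinner, sum_congr rfl hlast, sum_add_distrib, ih,
      sum_range_succ (fun t : ℕ => (2 * (t : ℝ) + 1) * g t) n]
    simp only [sum_const, card_range, nsmul_eq_mul]
    push_cast
    ring

theorem sum_two_mul_add_five_div_two_pow (n : ℕ) :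
    ∑ t ∈ range n, (2 * t + 5 : ℝ) / 2 ^ t = 14 - (4 * n + 14) / 2 ^ n := by
  induction n with
  | zero => norm_num
  | succ n ih =>
    rw [sum_range_succ, ih]
    field_simp
    push_cast
    ring

theorem massWeight_pow_succ {N : ℕ} (hN : 2 ≤ N) (t : ℕ) :
    massWeight (N ^ (t + 1)) = 2 / (N : ℝ) ^ (t + 1) := by
  rw [massWeight, if_neg (Nat.one_lt_pow t.succ_ne_zero hN).ne', Nat.cast_pow]

theorem sum_sum_massWeight_le {N : ℕ} (hN : 2 ≤ N) (ν : ℕ) :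
    ∑ t ∈ range (ν + 1), ∑ t' ∈ range (ν + 1), massWeight (N ^ max t t') ≤
      Real.exp (6 / N + 28 / (N : ℝ) ^ 2) := by
  have hN' : (2 : ℝ) ≤ N := by exact_mod_cast hN
  have hterm : ∀ t : ℕ, (2 * ((t + 1 + 1 : ℕ) : ℝ) + 1) * massWeight (N ^ (t + 1 + 1)) ≤
      2 / (N : ℝ) ^ 2 * ((2 * t + 5) / 2 ^ t) := fun t => by
    calc _ = 2 / (N : ℝ) ^ 2 * ((2 * t + 5) / (N : ℝ) ^ t) := by
          rw [massWeight_pow_succ hN]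
          push_cast
          field_simp
          ring
      _ ≤ _ := by gcongr
  rw [sum_sum_max fun t => massWeight (N ^ t)]
  calc ∑ t ∈ range (ν + 1), (2 * (t : ℝ) + 1) * massWeight (N ^ t)
      ≤ ∑ t ∈ range (ν + 1 + 1), (2 * (t : ℝ) + 1) * massWeight (N ^ t) := by
        rw [sum_range_succ _ (ν + 1)]
        exact le_add_of_nonneg_right (mul_nonneg (by positivity) (massWeight_nonneg _))
    _ ≤ ∑ t ∈ range ν, 2 / (N : ℝ) ^ 2 * ((2 * t + 5) / 2 ^ t) + 6 / N + 1 := by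
        rw [sum_range_succ', sum_range_succ', massWeight_pow_succ hN]
        have hsum := sum_le_sum fun t (_ : t ∈ range ν) => hterm t
        have h0 : massWeight (N ^ 0) = 1 := by simp [massWeight]
        rw [h0]
        push_cast at hsum ⊢
        have h6 : (2 * (0 + 1) + 1) * (2 / (N : ℝ) ^ (0 + 1)) = 6 / N := by ring
        linarith
    _ ≤ (6 / N + 28 / (N : ℝ) ^ 2) + 1 := by
        rw [← mul_sum, sum_two_mul_add_five_div_two_pow]
        have htail : (0 : ℝ) ≤ 2 / (N : ℝ) ^ 2 * ((4 * ν + 14) / 2 ^ ν) := by positivity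
        linear_combination htail
    _ ≤ _ := Real.add_one_le_exp _

theorem sum_one_div_pow_le {N : ℝ} (hN : 2 ≤ N) (ν : ℕ) :
    ∑ t ∈ Icc 1 ν, 1 / N ^ t ≤ 2 / N := by
  have : 0 < N := by linarith
  calc ∑ t ∈ Icc 1 ν, 1 / N ^ t = 1 / N * ∑ t ∈ range ν, (1 / N) ^ t := by
        rw [← Ico_add_one_right_eq_Icc, sum_Ico_eq_sum_range, Nat.add_sub_cancel, mul_sum]
        exact sum_congr rfl fun t _ => by ring
    _ ≤ 1 / N * ∑ t ∈ range ν, (1 / 2) ^ t := by gcongr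
    _ ≤ 1 / N * 2 := by gcongr; exact sum_geometric_two_le ν
    _ = 2 / N := by ring

theorem sum_comp_le_mul_sum {ι β : Type*} [DecidableEq β] {S : Finset ι} {r : ι → β}
    {T : Finset β} {s : ℕ} (hr : ∀ i ∈ S, r i ∈ T)
    (hs : ∀ i ∈ S, #(S.filter fun i' => r i' = r i) ≤ s) {φ : β → ℝ} (hφ : ∀ h, 0 ≤ φ h) :
    ∑ i ∈ S, φ (r i) ≤ s * ∑ h ∈ T, φ h := by
  rw [← sum_fiberwise_of_maps_to hr, mul_sum]
  refine sum_le_sum fun h _ => ?_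
  rw [sum_congr rfl fun i hi => congrArg φ (mem_filter.1 hi).2, sum_const, nsmul_eq_mul]
  refine mul_le_mul_of_nonneg_right (Nat.cast_le.2 ?_) (hφ h)
  rcases eq_empty_or_nonempty (S.filter fun i => r i = h) with hempty | ⟨i, hi⟩
  · rw [hempty, card_empty]
    exact Nat.zero_le _
  · obtain ⟨hiS, rfl⟩ := mem_filter.1 hi
    exact hs i hiS

theorem sum_sum_prod_le {ι κ β : Type*} [DecidableEq β] {S : Finset ι} {U : Finset κ}
    {F : ι → κ → β} {T : κ → Finset β} {s : ℕ} (hF : ∀ i ∈ S, ∀ k ∈ U, F i k ∈ T k)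
    (hs : ∀ i ∈ S, #(S.filter fun i' => ∀ k ∈ U, F i' k = F i k) ≤ s) {w : κ → β → β → ℝ}
    (hw : ∀ k t t', 0 ≤ w k t t') :
    ∑ i ∈ S, ∑ i' ∈ S, ∏ k ∈ U, w k (F i k) (F i' k) ≤
      (s : ℝ) ^ 2 * ∏ k ∈ U, ∑ t ∈ T k, ∑ t' ∈ T k, w k t t' := by
  let T' : Finset (U → β) := Fintype.piFinset fun k : U => T k
  let r : ι → U → β := fun i k => F i k
  let W : (U → β) → (U → β) → ℝ := fun h h' => ∏ k : U, w k (h k) (h' k)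
  have hr : ∀ i ∈ S, r i ∈ T' := fun i hi => Fintype.mem_piFinset.2 fun k => hF i hi k k.2
  have hs' : ∀ i ∈ S, #(S.filter fun i' => r i' = r i) ≤ s := fun i hi => by
    simpa only [r, funext_iff, Subtype.forall] using hs i hi
  have hW : ∀ h h', 0 ≤ W h h' := fun h h' => prod_nonneg fun k _ => hw _ _ _
  calc ∑ i ∈ S, ∑ i' ∈ S, ∏ k ∈ U, w k (F i k) (F i' k)
      = ∑ i ∈ S, ∑ i' ∈ S, W (r i) (r i') :=
        sum_congr rfl fun i _ => sum_congr rfl fun i' _ =>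
          (prod_coe_sort U fun k => w k (F i k) (F i' k)).symm
    _ ≤ ∑ i ∈ S, s * ∑ h' ∈ T', W (r i) h' :=
        sum_le_sum fun i _ => sum_comp_le_mul_sum hr hs' (hW (r i))
    _ ≤ s * (s * ∑ h ∈ T', ∑ h' ∈ T', W h h') := by
        rw [← mul_sum]
        exact mul_le_mul_of_nonneg_left
          (sum_comp_le_mul_sum hr hs' fun h => sum_nonneg fun h' _ => hW h h') (Nat.cast_nonneg _)
    _ = (s : ℝ) ^ 2 * ∏ k ∈ U, ∑ t ∈ T k, ∑ t' ∈ T k, w k t t' := by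
        rw [← prod_coe_sort U fun k => ∑ t ∈ T k, ∑ t' ∈ T k, w k t t', prod_univ_sum, sq,
          mul_assoc]
        simp only [prod_univ_sum, W, T']

end EulerProduct

/-! ### Ideals with prescribed exponents -/

section PrimePowProd

open Finset

variable {R : Type*} [CommRing R]

/-- The ideal `p 1 ^ f 1 * ⋯ * p l ^ f l`. The sequence `p` starts at index `1`. -/
def primePowProd (p : ℕ → Ideal R) (f : ℕ → ℕ) (l : ℕ) : Ideal R :=
  ∏ k ∈ Icc 1 l, p k ^ f k

theorem primePowProd_succ (p : ℕ → Ideal R) (f : ℕ → ℕ) (l : ℕ) :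
    primePowProd p f (l + 1) = primePowProd p f l * p (l + 1) ^ f (l + 1) :=
  prod_Icc_succ_top (by omega) _

theorem primePowProd_congr (p : ℕ → Ideal R) {f g : ℕ → ℕ} {l : ℕ}
    (h : ∀ k ∈ Icc 1 l, f k = g k) : primePowProd p f l = primePowProd p g l :=
  prod_congr rfl fun k hk => by rw [h k hk]

theorem primePowProd_le_of_exponent_le (p : ℕ → Ideal R) {f g : ℕ → ℕ} {l : ℕ}
    (h : ∀ k ∈ Icc 1 l, f k ≤ g k) : primePowProd p g l ≤ primePowProd p f l :=
  Ideal.le_of_dvd (prod_dvd_prod_of_dvd _ _ fun k hk => pow_dvd_pow _ (h k hk))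

theorem primePowProd_antitone (p : ℕ → Ideal R) (f : ℕ → ℕ) : Antitone (primePowProd p f) :=
  fun _ _ h => Ideal.le_of_dvd (prod_dvd_prod_of_subset _ _ _ (Icc_subset_Icc_right h))

theorem primePowProd_inf_le {p : ℕ → Ideal R} {l : ℕ}
    (hp : ∀ k ∈ Icc 1 l, ∀ m ∈ Icc 1 l, k ≠ m → IsCoprime (p k) (p m)) (f g : ℕ → ℕ) :
    primePowProd p f l ⊓ primePowProd p g l ≤ primePowProd p (fun k => max (f k) (g k)) l := by
  unfold primePowProd
  rw [Ideal.prod_eq_iInf_of_pairwise_isCoprime (J := fun k => p k ^ max (f k) (g k))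
    fun k hk m hm hkm => (hp k hk m hm hkm).pow]
  refine le_iInf₂ fun k hk => ?_
  rcases le_total (f k) (g k) with h | h
  · rw [max_eq_right h]
    exact inf_le_right.trans (Ideal.le_of_dvd (dvd_prod_of_mem (fun k => p k ^ g k) hk))
  · rw [max_eq_left h]
    exact inf_le_left.trans (Ideal.le_of_dvd (dvd_prod_of_mem (fun k => p k ^ f k) hk))

/-- The modulus `p 1 ^ g 1 * ⋯ * p l ^ g l` is coprime to the power of `p (l + 1)` in the other
ideal, which is all that is left of that ideal. -/
theorem primePowProd_inf_primePowProd_succ {p : ℕ → Ideal R} {l : ℕ}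
    (hp : ∀ k ∈ Icc 1 l, IsCoprime (p k) (p (l + 1))) {f g : ℕ → ℕ}
    (hfg : ∀ k ∈ Icc 1 l, f k ≤ g k) :
    primePowProd p g l ⊓ primePowProd p f (l + 1) =
      primePowProd p g l * p (l + 1) ^ f (l + 1) := by
  have hcop : ∀ h, IsCoprime (primePowProd p h l) (p (l + 1) ^ f (l + 1)) := fun h =>
    IsCoprime.prod_left fun k hk => (hp k hk).pow
  rw [primePowProd_succ, Ideal.mul_eq_inf_of_isCoprime (hcop f),
    Ideal.mul_eq_inf_of_isCoprime (hcop g), ← inf_assoc,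
    inf_eq_left.2 (primePowProd_le_of_exponent_le p hfg)]

variable [IsDedekindDomain R]

theorem exists_exponents_of_dvd {p : ℕ → Ideal R} {ν : ℕ → ℕ} {l : ℕ}
    (hp : ∀ k ∈ Icc 1 l, Prime (p k)) {I : Ideal R} (hI : I ∣ primePowProd p ν l) :
    ∃ f : ℕ → ℕ, (∀ k ∈ Icc 1 l, f k ≤ ν k) ∧ I = primePowProd p f l := by
  induction l generalizing I with
  | zero =>
    exact ⟨0, by simp, isUnit_iff_eq_one.1 (isUnit_of_dvd_one hI)⟩
  | succ l ih =>
    rw [primePowProd_succ] at hI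
    obtain ⟨I', q, hI', hq, rfl⟩ := exists_dvd_and_dvd_of_dvd_mul hI
    obtain ⟨f, hf, rfl⟩ := ih (fun k hk => hp k (Icc_subset_Icc_right l.le_succ hk)) hI'
    obtain ⟨e, he, hqe⟩ := (dvd_prime_pow (hp (l + 1) (by simp)) _).1 hq
    have hlt : ∀ k ∈ Icc 1 l, k ≠ l + 1 := fun k hk => ((mem_Icc.1 hk).2.trans_lt l.lt_succ_self).ne
    refine ⟨Function.update f (l + 1) e, fun k hk => ?_, ?_⟩
    · rcases eq_or_ne k (l + 1) with rfl | hk'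
      · rwa [Function.update_self]
      · rw [Function.update_of_ne hk']
        exact hf k (by simp only [mem_Icc] at hk ⊢; omega)
    · rw [primePowProd_succ, Function.update_self, associated_iff_eq.1 hqe]
      congr 1
      exact primePowProd_congr p fun k hk => (Function.update_of_ne (hlt k hk) _ _).symm

theorem exponent_eq_zero_iff_not_dvd {p : ℕ → Ideal R} {l k : ℕ}
    (hp : ∀ k ∈ Icc 1 l, Prime (p k)) (hinj : Set.InjOn p (Icc 1 l)) (f : ℕ → ℕ)
    (hk : k ∈ Icc 1 l) :
    f k = 0 ↔ ¬p k ∣ primePowProd p f l := by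
  refine ⟨fun h0 hdvd => ?_, not_imp_comm.1 fun h0 => ?_⟩
  · obtain ⟨m, hm, hdvd⟩ := ((hp k hk).dvd_finsetProd_iff _).1 hdvd
    have hkm : k = m := hinj hk hm (associated_iff_eq.1
      (((hp k hk).dvd_prime_iff_associated (hp m hm)).1 ((hp k hk).dvd_of_dvd_pow hdvd)))
    rw [← hkm, h0, pow_zero] at hdvd
    exact (hp k hk).not_isUnit (isUnit_of_dvd_one hdvd)
  · exact (dvd_pow_self _ h0).trans (dvd_prod_of_mem (fun k => p k ^ f k) hk)

end PrimePowProd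

section QuotientImage

variable {R : Type*} [CommRing R] {Q I M : Ideal R}

/-- The image of the ideal `I` in `R ⧸ Q`, as an additive subgroup. The congruence classes modulo
`I ⊇ Q` are its cosets. -/
def quotientImage (Q I : Ideal R) : AddSubgroup (R ⧸ Q) :=
  (I.map (Ideal.Quotient.mk Q)).toAddSubgroup

theorem quotientImage_mono (h : I ≤ M) : quotientImage Q I ≤ quotientImage Q M :=
  Submodule.toAddSubgroup_mono (Ideal.map_mono h)

theorem quotientImage_inf (hI : Q ≤ I) (hM : Q ≤ M) :
    quotientImage Q I ⊓ quotientImage Q M = quotientImage Q (I ⊓ M) := by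
  ext x
  obtain ⟨u, rfl⟩ := Ideal.Quotient.mk_surjective x
  change _ ∈ I.map _ ∧ _ ∈ M.map _ ↔ _ ∈ (I ⊓ M).map _
  rw [Ideal.mem_quotient_iff_mem hI, Ideal.mem_quotient_iff_mem hM,
    Ideal.mem_quotient_iff_mem (le_inf hI hM), Submodule.mem_inf]

variable [IsDedekindDomain R] [Module.Free ℤ R]

theorem index_quotientImage (h : Q ≤ I) : (quotientImage Q I).index = Ideal.absNorm I :=
  Nat.card_congr (DoubleQuot.quotQuotEquivQuotOfLE h).toEquiv

theorem relIndex_quotientImage {q : Ideal R} (hI : Q ≤ I) (hM : Q ≤ M) (hI0 : Ideal.absNorm I ≠ 0)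
    (hq : I ⊓ M = I * q) :
    (quotientImage Q M).relIndex (quotientImage Q I) = Ideal.absNorm q := by
  have hle : quotientImage Q (I ⊓ M) ≤ quotientImage Q I := quotientImage_mono inf_le_left
  have hmul := AddSubgroup.relIndex_mul_index hle
  rw [index_quotientImage hI, index_quotientImage (le_inf hI hM), hq, map_mul, ← hq,
    ← quotientImage_inf hI hM, AddSubgroup.inf_relIndex_left, mul_comm] at hmul
  exact mul_left_cancel₀ hI0 hmul

end QuotientImage

/-! ### The distortion process -/

/-- A finite system of congruence classes `a i + I i` in `𝓞 K` with its distorted measures `P j`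
on `𝓞 K ⧸ Q`. Here `Q = p 1 ^ ν 1 * ⋯ * p J ^ ν J` is any common multiple of the moduli, the primes
are indexed by `1, …, J` in order of increasing norm, and the values of `p`, `ν`, `B`, `α`, `δ` and
`P` at other indices are arbitrary. The fibres of the projection to `𝓞 K ⧸ Q_l` are the cosets of
the image of `Q_l = primePowProd p ν l`. -/
structure DistortionProcess (K : Type*) [Field K] [NumberField K] (ι : Type*) where
  a : ι → 𝓞 K
  I : ι → Ideal (𝓞 K)
  J : ℕ
  p : ℕ → Ideal (𝓞 K)
  ν : ℕ → ℕ
  Q : Ideal (𝓞 K)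
  [fintypeQuotient : Fintype (𝓞 K ⧸ Q)]
  B : ℕ → Finset (𝓞 K ⧸ Q)
  α : ℕ → 𝓞 K ⧸ Q → ℝ
  δ : ℕ → ℝ
  P : ℕ → 𝓞 K ⧸ Q → ℝ
  isPrime : ∀ k ∈ Finset.Icc 1 J, (p k).IsPrime
  injOn_p : Set.InjOn p (Finset.Icc 1 J)
  monotoneOn_absNorm : MonotoneOn (fun k => Ideal.absNorm (p k)) (Finset.Icc 1 J)
  one_le_ν : ∀ k ∈ Finset.Icc 1 J, 1 ≤ ν k
  Q_eq : Q = primePowProd p ν J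
  Q_le : ∀ i, Q ≤ I i
  mem_B_succ : ∀ l < J, ∀ x, x ∈ B (l + 1) ↔ ∃ i, IsPmin (I i) (p (l + 1)) ∧
    x - Ideal.Quotient.mk Q (a i) ∈ quotientImage Q (I i)
  α_succ : ∀ l < J, α (l + 1) = cosetAverage (quotientImage Q (primePowProd p ν l)) fun x =>
    if x ∈ B (l + 1) then 1 else 0
  δ_mem : ∀ k ∈ Finset.Icc 1 J, δ k ∈ Set.Icc (0 : ℝ) (1 / 2)
  P_zero : ∀ x, P 0 x = 1 / Fintype.card (𝓞 K ⧸ Q)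
  P_succ : ∀ l < J, P (l + 1) = distort (α (l + 1)) (B (l + 1)) (δ (l + 1)) (P l)

attribute [instance] DistortionProcess.fintypeQuotient

namespace DistortionProcess

open Finset

variable {K : Type*} [Field K] [NumberField K] {ι : Type*} (D : DistortionProcess K ι) {l : ℕ}

theorem Q_ne_bot : D.Q ≠ ⊥ := by
  rw [Ne, ← Ideal.absNorm_eq_zero_iff, ← Ne, Ideal.absNorm_ne_zero_iff]
  infer_instance

variable {D} in
theorem prime_p {k : ℕ} (hk : k ∈ Icc 1 D.J) : Prime (D.p k) := by
  refine Ideal.prime_of_isPrime (fun hbot => D.Q_ne_bot ?_) (D.isPrime k hk)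
  rw [D.Q_eq]
  refine prod_eq_zero hk ?_
  rw [hbot]
  exact zero_pow (Nat.one_le_iff_ne_zero.1 (D.one_le_ν k hk))

variable {D} in
theorem isCoprime_p {k m : ℕ} (hk : k ∈ Icc 1 D.J) (hm : m ∈ Icc 1 D.J) (hkm : k ≠ m) :
    IsCoprime (D.p k) (D.p m) := by
  have := (D.isPrime k hk).isMaximal (prime_p hk).ne_zero
  have := (D.isPrime m hm).isMaximal (prime_p hm).ne_zero
  exact Ideal.isCoprime_of_isMaximal fun h => hkm (D.injOn_p hk hm h)

/-- The image in `𝓞 K ⧸ Q` of the ideal `p 1 ^ f 1 * ⋯ * p l ^ f l`. For `f = ν` its cosets are the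
fibres of the projection to `𝓞 K ⧸ Q_l`. -/
def imageSubgroup (f : ℕ → ℕ) (l : ℕ) : AddSubgroup (𝓞 K ⧸ D.Q) :=
  quotientImage D.Q (primePowProd D.p f l)

theorem imageSubgroup_ν_le {f : ℕ → ℕ} (hf : ∀ k ∈ Icc 1 l, f k ≤ D.ν k) :
    D.imageSubgroup D.ν l ≤ D.imageSubgroup f l :=
  quotientImage_mono (primePowProd_le_of_exponent_le _ hf)

theorem imageSubgroup_antitone (f : ℕ → ℕ) : Antitone (D.imageSubgroup f) :=
  fun _ _ h => quotientImage_mono (primePowProd_antitone _ f h)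

theorem Q_le_primePowProd {f : ℕ → ℕ} (hl : l ≤ D.J) (hf : ∀ k ∈ Icc 1 l, f k ≤ D.ν k) :
    D.Q ≤ primePowProd D.p f l :=
  D.Q_eq.trans_le ((primePowProd_antitone _ _ hl).trans (primePowProd_le_of_exponent_le _ hf))

theorem imageSubgroup_inf_le {f g : ℕ → ℕ} (hl : l ≤ D.J) (hf : ∀ k ∈ Icc 1 l, f k ≤ D.ν k)
    (hg : ∀ k ∈ Icc 1 l, g k ≤ D.ν k) :
    D.imageSubgroup f l ⊓ D.imageSubgroup g l ≤
      D.imageSubgroup (fun k => max (f k) (g k)) l := by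
  rw [imageSubgroup, imageSubgroup,
    quotientImage_inf (D.Q_le_primePowProd hl hf) (D.Q_le_primePowProd hl hg)]
  have hsub := Icc_subset_Icc_right (a := 1) hl
  exact quotientImage_mono (primePowProd_inf_le
    (fun k hk m hm => isCoprime_p (hsub hk) (hsub hm)) f g)

theorem relIndex_imageSubgroup_succ {f : ℕ → ℕ} (hl : l < D.J)
    (hf : ∀ k ∈ Icc 1 (l + 1), f k ≤ D.ν k) :
    (D.imageSubgroup f (l + 1)).relIndex (D.imageSubgroup D.ν l) =
      Ideal.absNorm (D.p (l + 1)) ^ f (l + 1) := by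
  have hQ := D.Q_le_primePowProd hl.le fun _ _ => le_rfl
  have hne : primePowProd D.p D.ν l ≠ ⊥ := ne_bot_of_le_ne_bot D.Q_ne_bot hQ
  rw [imageSubgroup, imageSubgroup, ← map_pow]
  refine relIndex_quotientImage hQ (D.Q_le_primePowProd hl hf)
    (Ideal.absNorm_eq_zero_iff.not.2 hne) (primePowProd_inf_primePowProd_succ (fun k hk => ?_)
      fun k hk => hf k (Icc_subset_Icc_right l.le_succ hk))
  obtain ⟨hk1, hkl⟩ := mem_Icc.1 hk
  exact isCoprime_p (mem_Icc.2 ⟨hk1, by omega⟩) (mem_Icc.2 ⟨by omega, hl⟩) (by omega)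

theorem exists_exponents (i : ι) :
    ∃ f : ℕ → ℕ, (∀ k ∈ Icc 1 D.J, f k ≤ D.ν k) ∧ D.I i = primePowProd D.p f D.J :=
  exists_exponents_of_dvd (fun _ hk => prime_p hk) (Ideal.dvd_iff_le.2 (D.Q_eq ▸ D.Q_le i))

/-- The exponents of the prime factorisation of the modulus `I i`; arbitrary outside `1, …, J`. -/
noncomputable def exponent (i : ι) : ℕ → ℕ := (D.exists_exponents i).choose

theorem exponent_le (i : ι) : ∀ k ∈ Icc 1 D.J, D.exponent i k ≤ D.ν k :=
  (D.exists_exponents i).choose_spec.1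

theorem I_eq (i : ι) : D.I i = primePowProd D.p (D.exponent i) D.J :=
  (D.exists_exponents i).choose_spec.2

theorem exponent_eq_zero_iff {k : ℕ} (hk : k ∈ Icc 1 D.J) (i : ι) :
    D.exponent i k = 0 ↔ ¬D.p k ∣ D.I i := by
  rw [D.I_eq i]
  exact exponent_eq_zero_iff_not_dvd (fun _ => prime_p) D.injOn_p _ hk

variable {D} in
theorem I_eq_of_isPmin {i : ι} (hl : l ∈ Icc 1 D.J) (hi : IsPmin (D.I i) (D.p l)) :
    D.I i = primePowProd D.p (D.exponent i) l := by
  rw [D.I_eq i]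
  refine (prod_subset (Icc_subset_Icc_right (mem_Icc.1 hl).2) fun k hk hkl => ?_).symm
  have hlk : l < k := by
    simp only [mem_Icc] at hk hkl
    omega
  rw [(D.exponent_eq_zero_iff hk i).2 fun hdvd => ?_, pow_zero]
  have hlt := hi.2.2 _ (D.isPrime k hk) hdvd fun h => hlk.ne' (D.injOn_p hk hl h)
  exact (D.monotoneOn_absNorm hl hk hlk.le).not_gt hlt

variable {D} in
theorem exponent_pos_of_isPmin {i : ι} (hl : l ∈ Icc 1 D.J) (hi : IsPmin (D.I i) (D.p l)) :
    1 ≤ D.exponent i l :=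
  Nat.one_le_iff_ne_zero.2 fun h0 => (D.exponent_eq_zero_iff hl i).1 h0 hi.2.1

theorem exponent_le_of_le (i : ι) (hl : l ≤ D.J) : ∀ k ∈ Icc 1 l, D.exponent i k ≤ D.ν k :=
  fun k hk => D.exponent_le i k (Icc_subset_Icc_right hl hk)

theorem mem_B_succ_iff (hl : l < D.J) (x : 𝓞 K ⧸ D.Q) :
    x ∈ D.B (l + 1) ↔ ∃ i, IsPmin (D.I i) (D.p (l + 1)) ∧
      x - Ideal.Quotient.mk D.Q (D.a i) ∈ D.imageSubgroup (D.exponent i) (l + 1) := by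
  rw [D.mem_B_succ l hl]
  exact exists_congr fun i => and_congr_right fun hi => by
    rw [imageSubgroup, I_eq_of_isPmin (mem_Icc.2 ⟨l.succ_pos, hl⟩) hi]

theorem add_mem_B_succ_iff (hl : l < D.J) {h : 𝓞 K ⧸ D.Q} (hh : h ∈ D.imageSubgroup D.ν (l + 1))
    (x : 𝓞 K ⧸ D.Q) : x + h ∈ D.B (l + 1) ↔ x ∈ D.B (l + 1) := by
  simp only [D.mem_B_succ_iff hl, add_sub_right_comm]
  refine exists_congr fun i => and_congr_right fun _ => AddSubgroup.add_mem_cancel_right _ ?_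
  exact D.imageSubgroup_ν_le (D.exponent_le_of_le i hl) hh

theorem α_succ_nonneg (hl : l < D.J) (x : 𝓞 K ⧸ D.Q) : 0 ≤ D.α (l + 1) x := by
  rw [D.α_succ l hl]
  exact cosetAverage_nonneg _ (fun y => by positivity) x

theorem P_nonneg (hl : l ≤ D.J) (x : 𝓞 K ⧸ D.Q) : 0 ≤ D.P l x := by
  induction l with
  | zero =>
    rw [D.P_zero]
    positivity
  | succ l ih =>
    rw [D.P_succ l hl]
    exact (distort_mem_Icc (D.α_succ_nonneg hl x)
      (D.δ_mem _ (mem_Icc.2 ⟨l.succ_pos, hl⟩)) (ih (l.le_succ.trans hl))).1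

theorem P_periodic (hl : l ≤ D.J) {h : 𝓞 K ⧸ D.Q} (hh : h ∈ D.imageSubgroup D.ν l) :
    Function.Periodic (D.P l) h := by
  induction l with
  | zero => exact fun x => by rw [D.P_zero, D.P_zero]
  | succ l ih =>
    have hh' : h ∈ D.imageSubgroup D.ν l := D.imageSubgroup_antitone _ l.le_succ hh
    rw [D.P_succ l hl]
    refine distort_periodic ?_ (D.add_mem_B_succ_iff hl hh) (ih (l.le_succ.trans hl) hh') _
    rw [D.α_succ l hl]
    exact cosetAverage_periodic _ _ hh'

theorem sum_P_mul_cosetIndicator_le (hl : l ≤ D.J) {f : ℕ → ℕ} (hf : ∀ k ∈ Icc 1 l, f k ≤ D.ν k)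
    (b : 𝓞 K ⧸ D.Q) :
    ∑ x, D.P l x * cosetIndicator (D.imageSubgroup f l) b x ≤
      ∏ k ∈ Icc 1 l, massWeight (Ideal.absNorm (D.p k) ^ f k) := by
  induction l with
  | zero =>
    have hone : ∀ x, D.P 0 x * cosetIndicator (D.imageSubgroup f 0) b x ≤
        1 / Fintype.card (𝓞 K ⧸ D.Q) := fun x => by
      rw [D.P_zero, cosetIndicator]
      exact mul_le_of_le_one_right (by positivity) (by split_ifs <;> norm_num)
    refine (sum_le_sum fun x _ => hone x).trans_eq ?_
    simp
  | succ l ih =>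
    have hl' := l.le_succ.trans hl
    have hf' : ∀ k ∈ Icc 1 l, f k ≤ D.ν k := fun k hk => hf k (Icc_subset_Icc_right l.le_succ hk)
    rw [D.P_succ l hl, D.α_succ l hl, prod_Icc_succ_top (by omega), mul_comm (∏ _ ∈ _, _),
      ← D.relIndex_imageSubgroup_succ hl hf]
    calc _ ≤ massWeight _ * ∑ x, D.P l x * cosetIndicator (D.imageSubgroup f l) b x :=
          sum_distort_mul_cosetIndicator_le (D.imageSubgroup_ν_le hf')
            (D.imageSubgroup_antitone f l.le_succ) (D.δ_mem _ (mem_Icc.2 ⟨l.succ_pos, hl⟩))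
            (D.P_nonneg hl') (fun h hh => D.P_periodic hl' hh) b
      _ ≤ _ := mul_le_mul_of_nonneg_left (ih hl' hf') (massWeight_nonneg _)

theorem sum_P_mul_cosetIndicator_mul_cosetIndicator_le (hl : l ≤ D.J) {f g : ℕ → ℕ}
    (hf : ∀ k ∈ Icc 1 l, f k ≤ D.ν k) (hg : ∀ k ∈ Icc 1 l, g k ≤ D.ν k) (b c : 𝓞 K ⧸ D.Q) :
    ∑ x, D.P l x *
        (cosetIndicator (D.imageSubgroup f l) b x * cosetIndicator (D.imageSubgroup g l) c x) ≤
      ∏ k ∈ Icc 1 l, massWeight (Ideal.absNorm (D.p k) ^ max (f k) (g k)) := by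
  obtain ⟨d, hd⟩ := exists_cosetIndicator_mul_le (D.imageSubgroup f l) (D.imageSubgroup g l) b c
  refine le_trans (sum_le_sum fun x _ => mul_le_mul_of_nonneg_left ?_ (D.P_nonneg hl x))
    (D.sum_P_mul_cosetIndicator_le hl (fun k hk => max_le (hf k hk) (hg k hk)) d)
  exact (hd x).trans (cosetIndicator_mono (D.imageSubgroup_inf_le hl hf hg) d x)

theorem two_le_absNorm_p {k : ℕ} (hk : k ∈ Icc 1 D.J) : 2 ≤ Ideal.absNorm (D.p k) :=
  two_le_absNorm_of_prime (prime_p hk)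

/-- The contribution of the prime `p k` to the bound for a pair of classes whose moduli contain
`p k` with the exponents `t` and `t'`. At the top prime `p l` it comes from the bound for `α l`,
at the smaller primes from the mass of the intersection of two classes. -/
noncomputable def pairWeight (l k t t' : ℕ) : ℝ :=
  if k = l then 1 / (Ideal.absNorm (D.p k) : ℝ) ^ t * (1 / (Ideal.absNorm (D.p k) : ℝ) ^ t')
  else massWeight (Ideal.absNorm (D.p k) ^ max t t')

/-- The exponents that `p k` can have in the moduli of `D.classes l`. -/
def exponentRange (l k : ℕ) : Finset ℕ := if k = l then Icc 1 (D.ν k) else range (D.ν k + 1)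

theorem pairWeight_nonneg (l k t t' : ℕ) : 0 ≤ D.pairWeight l k t t' := by
  unfold pairWeight
  split_ifs
  · positivity
  · exact massWeight_nonneg _

theorem prod_pairWeight_succ (l : ℕ) (f g : ℕ → ℕ) :
    ∏ k ∈ Icc 1 (l + 1), D.pairWeight (l + 1) k (f k) (g k) =
      (∏ k ∈ Icc 1 l, massWeight (Ideal.absNorm (D.p k) ^ max (f k) (g k))) *
        (1 / (Ideal.absNorm (D.p (l + 1)) : ℝ) ^ f (l + 1) *
          (1 / (Ideal.absNorm (D.p (l + 1)) : ℝ) ^ g (l + 1))) := by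
  rw [prod_Icc_succ_top (by omega), pairWeight, if_pos rfl]
  congr 1
  exact prod_congr rfl fun k hk => if_neg ((mem_Icc.1 hk).2.trans_lt l.lt_succ_self).ne

theorem image_p_subset_primesNormLE (hl : l < D.J) :
    (Icc 1 l).image D.p ⊆ primesNormLE K (Ideal.absNorm (D.p (l + 1))) := by
  intro q hq
  obtain ⟨k, hk, rfl⟩ := mem_image.1 hq
  have hkJ := Icc_subset_Icc_right hl.le hk
  exact mem_primesNormLE.2 ⟨prime_p hkJ, D.monotoneOn_absNorm hkJ
    (mem_Icc.2 ⟨l.succ_pos, hl⟩) ((mem_Icc.1 hk).2.trans l.le_succ)⟩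

theorem sum_sum_pairWeight_self_le (hl : l ∈ Icc 1 D.J) :
    ∑ t ∈ D.exponentRange l l, ∑ t' ∈ D.exponentRange l l, D.pairWeight l l t t' ≤
      (2 / (Ideal.absNorm (D.p l) : ℝ)) ^ 2 := by
  have hN : (2 : ℝ) ≤ Ideal.absNorm (D.p l) := by exact_mod_cast D.two_le_absNorm_p hl
  simp only [exponentRange, pairWeight, if_true, ← sum_mul_sum, ← sq]
  exact pow_le_pow_left₀ (sum_nonneg fun _ _ => by positivity) (sum_one_div_pow_le hN _) 2

theorem sum_sum_pairWeight_of_ne_le {k : ℕ} (hk : k ∈ Icc 1 D.J) (hkl : k ≠ l) :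
    ∑ t ∈ D.exponentRange l k, ∑ t' ∈ D.exponentRange l k, D.pairWeight l k t t' ≤
      Real.exp (6 / Ideal.absNorm (D.p k) + 28 / (Ideal.absNorm (D.p k) : ℝ) ^ 2) := by
  simp only [exponentRange, pairWeight, if_neg hkl]
  exact sum_sum_massWeight_le (D.two_le_absNorm_p hk) _

theorem prod_sum_sum_pairWeight_le (hl : l < D.J) :
    ∏ k ∈ Icc 1 (l + 1), ∑ t ∈ D.exponentRange (l + 1) k, ∑ t' ∈ D.exponentRange (l + 1) k,
        D.pairWeight (l + 1) k t t' ≤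
      (∏ q ∈ (Icc 1 l).image D.p,
        Real.exp (6 / Ideal.absNorm q + 28 / (Ideal.absNorm q : ℝ) ^ 2)) *
        (2 / (Ideal.absNorm (D.p (l + 1)) : ℝ)) ^ 2 := by
  have hsub : Icc 1 l ⊆ Icc 1 D.J := Icc_subset_Icc_right hl.le
  have hnonneg : ∀ k, 0 ≤ ∑ t ∈ D.exponentRange (l + 1) k, ∑ t' ∈ D.exponentRange (l + 1) k,
      D.pairWeight (l + 1) k t t' := fun k =>
    sum_nonneg fun t _ => sum_nonneg fun t' _ => D.pairWeight_nonneg _ _ _ _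
  rw [prod_Icc_succ_top (by omega), prod_image (D.injOn_p.mono (by exact_mod_cast hsub))]
  refine mul_le_mul (prod_le_prod (fun k _ => hnonneg k) fun k hk => ?_)
    (D.sum_sum_pairWeight_self_le (mem_Icc.2 ⟨l.succ_pos, hl⟩)) (hnonneg _)
    (prod_nonneg fun _ _ => (Real.exp_pos _).le)
  exact D.sum_sum_pairWeight_of_ne_le (hsub hk) ((mem_Icc.1 hk).2.trans_lt l.lt_succ_self).ne

variable [Fintype ι]

/-- The indices of the congruence classes making up `B l`. -/
noncomputable def classes (l : ℕ) : Finset ι := univ.filter fun i => IsPmin (D.I i) (D.p l)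

variable {D} in
theorem mem_classes {i : ι} : i ∈ D.classes l ↔ IsPmin (D.I i) (D.p l) := by
  simp [classes]

theorem α_succ_le (hl : l < D.J) (x : 𝓞 K ⧸ D.Q) :
    D.α (l + 1) x ≤ ∑ i ∈ D.classes (l + 1),
      1 / (Ideal.absNorm (D.p (l + 1)) : ℝ) ^ D.exponent i (l + 1) *
        cosetIndicator (D.imageSubgroup (D.exponent i) l) (Ideal.Quotient.mk D.Q (D.a i)) x := by
  have hB : ∀ y, (if y ∈ D.B (l + 1) then (1 : ℝ) else 0) ≤ ∑ i ∈ D.classes (l + 1),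
      cosetIndicator (D.imageSubgroup (D.exponent i) (l + 1))
        (Ideal.Quotient.mk D.Q (D.a i)) y := fun y => by
    split_ifs with hy
    · obtain ⟨i, hi, hmem⟩ := (D.mem_B_succ_iff hl y).1 hy
      exact (if_pos hmem).symm.trans_le (single_le_sum
        (f := fun i => cosetIndicator (D.imageSubgroup (D.exponent i) (l + 1))
          (Ideal.Quotient.mk D.Q (D.a i)) y)
        (fun i _ => cosetIndicator_nonneg _ _ _) (mem_classes.2 hi))
    · exact sum_nonneg fun i _ => cosetIndicator_nonneg _ _ _
  rw [D.α_succ l hl]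
  refine (cosetAverage_mono _ hB x).trans ?_
  rw [cosetAverage_sum]
  refine sum_le_sum fun i _ => ?_
  refine (cosetAverage_cosetIndicator_le (D.imageSubgroup_ν_le (D.exponent_le_of_le i hl.le))
    (D.imageSubgroup_antitone _ l.le_succ) _ x).trans_eq ?_
  have hindex := D.relIndex_imageSubgroup_succ hl (D.exponent_le_of_le i hl)
  unfold imageSubgroup at hindex ⊢
  rw [hindex, Nat.cast_pow, div_eq_mul_one_div, mul_comm]

theorem exponent_mem_exponentRange {i : ι} (hl : l ∈ Icc 1 D.J) (hi : i ∈ D.classes l) {k : ℕ}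
    (hk : k ∈ Icc 1 l) : D.exponent i k ∈ D.exponentRange l k := by
  have hle := D.exponent_le_of_le i (mem_Icc.1 hl).2 k hk
  unfold exponentRange
  split_ifs with hkl
  · subst hkl
    exact mem_Icc.2 ⟨exponent_pos_of_isPmin hl (mem_classes.1 hi), hle⟩
  · exact mem_range_succ_iff.2 hle

theorem card_filter_exponent_eq_le {s : ℕ} (hs : ∀ I₀, #(univ.filter fun i => D.I i = I₀) ≤ s)
    (hl : l ∈ Icc 1 D.J) {i : ι} (hi : i ∈ D.classes l) :
    #((D.classes l).filter fun i' => ∀ k ∈ Icc 1 l, D.exponent i' k = D.exponent i k) ≤ s := by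
  refine le_trans (card_le_card fun i' hi' => ?_) (hs (D.I i))
  simp only [mem_filter] at hi' ⊢
  obtain ⟨hi', heq⟩ := hi'
  rw [I_eq_of_isPmin hl (mem_classes.1 hi), I_eq_of_isPmin hl (mem_classes.1 hi')]
  exact ⟨mem_univ _, primePowProd_congr _ heq⟩

theorem sum_sq_α_mul_P_le_sum_sum (hl : l < D.J) :
    ∑ x, D.α (l + 1) x ^ 2 * D.P l x ≤ ∑ i ∈ D.classes (l + 1), ∑ i' ∈ D.classes (l + 1),
      ∏ k ∈ Icc 1 (l + 1), D.pairWeight (l + 1) k (D.exponent i k) (D.exponent i' k) := by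
  set v : ι → ℝ := fun i => 1 / (Ideal.absNorm (D.p (l + 1)) : ℝ) ^ D.exponent i (l + 1)
  set e : ι → 𝓞 K ⧸ D.Q → ℝ := fun i =>
    cosetIndicator (D.imageSubgroup (D.exponent i) l) (Ideal.Quotient.mk D.Q (D.a i))
  have hv0 : ∀ i, 0 ≤ v i := fun i => by positivity
  calc ∑ x, D.α (l + 1) x ^ 2 * D.P l x
      ≤ ∑ x, (∑ i ∈ D.classes (l + 1), v i * e i x) ^ 2 * D.P l x :=
        sum_le_sum fun x _ => mul_le_mul_of_nonneg_right
          (pow_le_pow_left₀ (D.α_succ_nonneg hl x) (D.α_succ_le hl x) 2) (D.P_nonneg hl.le x)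
    _ = ∑ i ∈ D.classes (l + 1), ∑ i' ∈ D.classes (l + 1),
          (∑ x, D.P l x * (e i x * e i' x)) * (v i * v i') := by
        simp only [sq, sum_mul_sum]
        simp only [sum_mul]
        rw [sum_comm]
        refine sum_congr rfl fun i _ => ?_
        rw [sum_comm]
        exact sum_congr rfl fun i' _ => sum_congr rfl fun x _ => by ring
    _ ≤ _ := by
        refine sum_le_sum fun i _ => sum_le_sum fun i' _ => ?_
        rw [prod_pairWeight_succ]
        exact mul_le_mul_of_nonneg_right (D.sum_P_mul_cosetIndicator_mul_cosetIndicator_le hl.le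
          (D.exponent_le_of_le i hl.le) (D.exponent_le_of_le i' hl.le) _ _)
          (mul_nonneg (hv0 i) (hv0 i'))

end DistortionProcess

theorem second_moment_bound_general (K : Type*) [Field K] [NumberField K] :
    ∃ C : ℝ, 0 < C ∧ ∀ {ι : Type*} [Fintype ι] (D : DistortionProcess K ι) (s : ℕ),
      (∀ I₀, (Finset.univ.filter fun i => D.I i = I₀).card ≤ s) →
        ∀ j ∈ Finset.Icc 1 D.J, ∑ x, D.α j x ^ 2 * D.P (j - 1) x ≤
          C * (s : ℝ) ^ 2 * Real.log (Ideal.absNorm (D.p j)) ^ 6 /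
            (Ideal.absNorm (D.p j) : ℝ) ^ 2 := by
  obtain ⟨C, hC, hprod⟩ := exists_prod_exp_le_log_pow K
  refine ⟨4 * C, by positivity, fun {ι _} D s hs j hj => ?_⟩
  obtain ⟨l, rfl⟩ := Nat.exists_eq_add_of_le' (Finset.mem_Icc.1 hj).1
  have hl : l < D.J := (Finset.mem_Icc.1 hj).2
  set N := Ideal.absNorm (D.p (l + 1))
  calc ∑ x, D.α (l + 1) x ^ 2 * D.P l x
      ≤ _ := D.sum_sq_α_mul_P_le_sum_sum hl
    _ ≤ (s : ℝ) ^ 2 * _ := sum_sum_prod_le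
        (fun i hi k hk => D.exponent_mem_exponentRange hj hi hk)
        (fun i hi => by convert D.card_filter_exponent_eq_le hs hj hi) (D.pairWeight_nonneg _)
    _ ≤ (s : ℝ) ^ 2 * (C * Real.log N ^ 6 * (2 / (N : ℝ)) ^ 2) := by
        gcongr
        refine (D.prod_sum_sum_pairWeight_le hl).trans ?_
        gcongr
        exact hprod N (D.two_le_absNorm_p hj) _ (D.image_p_subset_primesNormLE hl)
    _ = _ := by ring

/-- Second moment bound. -/
theorem second_moment_bound (K : Type*) [Field K] [NumberField K] :
    ∃ C : ℝ, 0 < C ∧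
      ∀ (n : ℕ) (hn : 0 < n)
        (a : Fin n → 𝓞 K) (Idl : Fin n → Ideal (𝓞 K))
        (hdist : ∀ i : Fin n, Distinguishable (Idl i))
        (hmono : ∀ i j : Fin n, i ≤ j → Ideal.absNorm (Idl i) ≤ Ideal.absNorm (Idl j))
        (s : ℕ)
        (hsle : ∀ I₀ : Ideal (𝓞 K), (Finset.univ.filter fun i : Fin n => Idl i = I₀).card ≤ s)
        (hseq : ∃ I₀ : Ideal (𝓞 K), (Finset.univ.filter fun i : Fin n => Idl i = I₀).card = s)
        (Q : Ideal (𝓞 K)) (hQ : Q = ⨅ i : Fin n, Idl i)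
        (J : ℕ) (p : ℕ → Ideal (𝓞 K)) (ν : ℕ → ℕ)
        (hp : ∀ j ∈ Finset.Icc 1 J, (p j).IsPrime)
        (hν : ∀ j ∈ Finset.Icc 1 J, 1 ≤ ν j)
        (hpinj : ∀ j ∈ Finset.Icc 1 J, ∀ j' ∈ Finset.Icc 1 J, p j = p j' → j = j')
        (hfact : Q = ∏ j ∈ Finset.Icc 1 J, p j ^ ν j)
        (hpmono : ∀ j ∈ Finset.Icc 1 J, ∀ j' ∈ Finset.Icc 1 J, j ≤ j' →
          Ideal.absNorm (p j) ≤ Ideal.absNorm (p j'))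
        (Qp : ℕ → Ideal (𝓞 K)) (hQp : ∀ j : ℕ, Qp j = ∏ i ∈ Finset.Icc 1 j, p i ^ ν i)
        [Fintype (𝓞 K ⧸ Q)]
        (B : ℕ → Finset (𝓞 K ⧸ Q))
        (hB : ∀ j ∈ Finset.Icc 1 J, B j = Finset.univ.filter fun x : 𝓞 K ⧸ Q =>
          ∃ i : Fin n, IsPmin (Idl i) (p j) ∧
            x - Ideal.Quotient.mk Q (a i) ∈ (Idl i).map (Ideal.Quotient.mk Q))
        (F : ℕ → (𝓞 K ⧸ Q) → Finset (𝓞 K ⧸ Q))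
        (hF : ∀ (j : ℕ) (x : 𝓞 K ⧸ Q),
          F j x = Finset.univ.filter fun x' : 𝓞 K ⧸ Q =>
            x' - x ∈ (Qp j).map (Ideal.Quotient.mk Q))
        (α : ℕ → (𝓞 K ⧸ Q) → ℝ)
        (hα : ∀ j ∈ Finset.Icc 1 J, ∀ x : 𝓞 K ⧸ Q,
          α j x = ((F (j - 1) x ∩ B j).card : ℝ) / ((F (j - 1) x).card : ℝ))
        (δ : ℕ → ℝ) (hδ : ∀ j ∈ Finset.Icc 1 J, δ j ∈ Set.Icc (0 : ℝ) (1 / 2))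
        (P : ℕ → (𝓞 K ⧸ Q) → ℝ)
        (hP0 : ∀ x : 𝓞 K ⧸ Q, P 0 x = 1 / (Fintype.card (𝓞 K ⧸ Q) : ℝ))
        (hPrec : ∀ j ∈ Finset.Icc 1 J, ∀ x : 𝓞 K ⧸ Q,
          P j x = if α j x < δ j then (if x ∈ B j then 0 else P (j - 1) x / (1 - α j x))
            else if α j x = 0 then P (j - 1) x
            else P (j - 1) x * (α j x - (if x ∈ B j then δ j else 0)) / (α j x * (1 - δ j))),
        ∀ j ∈ Finset.Icc 1 J,
          ∑ x : 𝓞 K ⧸ Q, (α j x) ^ 2 * P (j - 1) x ≤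
            C * (s : ℝ) ^ 2 * (Real.log (Ideal.absNorm (p j))) ^ 6 /
              (Ideal.absNorm (p j) : ℝ) ^ 2 := by
  obtain ⟨C, hC, hbound⟩ := second_moment_bound_general K
  refine ⟨C, hC, fun n _ a Idl _ _ s hsle _ Q hQ J p ν hp hν hpinj hfact hpmono Qp hQp _ B hB F hF
    α hα δ hδ P hP0 hPrec => ?_⟩
  have hmem : ∀ l < J, l + 1 ∈ Finset.Icc 1 J := fun l hl => Finset.mem_Icc.2 ⟨l.succ_pos, hl⟩
  have hα_succ : ∀ l < J, α (l + 1) = cosetAverage (quotientImage Q (primePowProd p ν l)) fun x =>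
      if x ∈ B (l + 1) then 1 else 0 := fun l hl => funext fun x => by
    rw [hα _ (hmem l hl), hF, hQp, Nat.add_sub_cancel, ← card_coset_inter_div_card]
    rfl
  exact hbound
    { a, I := Idl, J, p, ν, Q, B, α, δ, P
      isPrime := hp
      injOn_p := hpinj
      monotoneOn_absNorm := hpmono
      one_le_ν := hν
      Q_eq := hfact
      Q_le := fun i => hQ.trans_le (iInf_le Idl i)
      mem_B_succ := fun l hl x => by
        rw [hB _ (hmem l hl), Finset.mem_filter_univ]
        rfl
      α_succ := hα_succ
      δ_mem := hδ
      P_zero := hP0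
      P_succ := fun l hl => funext (hPrec _ (hmem l hl)) } s hsle
end

section
/- Let K be a number field with ring of integers O_K. For all real numbers x ≥ 1 and y ≥ 2, Σ_I 1/N(I) ≤ x^{−1/2} · ∏_{𝔭 : N(𝔭) ≤ y} (1 − N(𝔭)^{−1/2})^{−1}, where the (convergent) sum is over all nonzero ideals I of O_K with N(I) ≥ x all of whose prime ideal factors 𝔭 satisfy N(𝔭) ≤ y, and the (finite) product is over all prime ideals 𝔭 of O_K with N(𝔭) ≤ y. -/
set_option maxHeartbeats 1000000
set_option synthInstance.maxHeartbeats 1000000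

open scoped Classical
open NumberField

/-!
Rankin's trick. If `N a ≥ x` and `σ ≤ s`, then `N a ^ (-s) ≤ x ^ (σ - s) * N a ^ (-σ)`, so dropping
the condition `N a ≥ x` costs only the factor `x ^ (σ - s)`. By unique factorization, an element
with all its prime factors in a finite set `S` is determined by its exponents at the elements
of `S`, so any finite sum of the `N a ^ (-σ)` over such elements is part of the expansion of a
product over `S` of truncated geometric series of ratios `N p ^ (-σ)`.
-/

open UniqueFactorizationMonoid
open scoped NNReal

section Factored

variable {α : Type*} [CommMonoidWithZero α]

/-- The nonzero elements all of whose prime divisors lie in the finite set `S`: the analogue of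
`Nat.factoredNumbers` in a monoid with zero. -/
def factoredElements (S : Finset α) : Set α :=
  {a | a ≠ 0 ∧ ∀ p, Prime p → p ∣ a → p ∈ S}

variable [UniqueFactorizationMonoid α] [Subsingleton αˣ] {S : Finset α} {a : α}

lemma prod_pow_count_normalizedFactors (ha : a ∈ factoredElements S) :
    ∏ p ∈ S, p ^ (normalizedFactors a).count p = a := by
  have hsub : (normalizedFactors a).toFinset ⊆ S := fun p hp ↦
    have hp := (mem_normalizedFactors_iff ha.1).1 (Multiset.mem_toFinset.1 hp)
    ha.2 p hp.1 hp.2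
  rw [← Finset.prod_multiset_count_of_subset _ _ hsub]
  exact associated_iff_eq.1 (prod_normalizedFactors ha.1)

lemma injOn_count_normalizedFactors (S : Finset α) :
    (factoredElements S).InjOn fun a (p : S) ↦ (normalizedFactors a).count p.1 := by
  intro a ha b hb hab
  rw [← prod_pow_count_normalizedFactors ha, ← prod_pow_count_normalizedFactors hb]
  exact Finset.prod_congr rfl fun p hp ↦ congrArg (p ^ ·) (congrFun hab ⟨p, hp⟩)

variable {𝕜 : Type*} [Field 𝕜] [LinearOrder 𝕜] [IsStrictOrderedRing 𝕜]

lemma sum_le_prod_inv_one_sub_of_subset_factoredElements (f : α →* 𝕜)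
    (hf₀ : ∀ p ∈ S, 0 ≤ f p) (hf₁ : ∀ p ∈ S, f p < 1) {t : Finset α}
    (ht : ↑t ⊆ factoredElements S) :
    ∑ a ∈ t, f a ≤ ∏ p ∈ S, (1 - f p)⁻¹ := by
  let exponents (a : α) (p : S) : ℕ := (normalizedFactors a).count p.1
  let n : ℕ := t.sup (fun a ↦ (normalizedFactors a).card) + 1
  have f_eq (a) (ha : a ∈ t) : f a = ∏ p : S, f p ^ exponents a p := by
    conv_lhs => rw [← prod_pow_count_normalizedFactors (ht ha)]
    simp only [map_prod, map_pow]
    exact (Finset.prod_coe_sort S fun p ↦ f p ^ (normalizedFactors a).count p).symm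
  have exponents_mem (a) (ha : a ∈ t) :
      exponents a ∈ Fintype.piFinset fun _ : S ↦ Finset.range n :=
    Fintype.mem_piFinset.2 fun p ↦ Finset.mem_range.2 <| Nat.lt_succ_of_le <|
      (Multiset.count_le_card _ _).trans
        (Finset.le_sup (f := fun a ↦ (normalizedFactors a).card) ha)
  have geom_le (p : S) : ∑ k ∈ Finset.range n, f p ^ k ≤ (1 - f p)⁻¹ := by
    simpa using geom_sum_Ico_le_of_lt_one (m := 0) (n := n) (hf₀ p p.2) (hf₁ p p.2)
  calc ∑ a ∈ t, f a
      = ∑ a ∈ t, ∏ p : S, f p ^ exponents a p := Finset.sum_congr rfl f_eq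
    _ = ∑ e ∈ t.image exponents, ∏ p : S, f p ^ e p :=
        (Finset.sum_image (f := fun e : S → ℕ ↦ ∏ p : S, f p ^ e p)
          ((injOn_count_normalizedFactors S).mono ht)).symm
    _ ≤ ∑ e ∈ Fintype.piFinset fun _ : S ↦ Finset.range n, ∏ p : S, f p ^ e p :=
        Finset.sum_le_sum_of_subset_of_nonneg (Finset.image_subset_iff.2 exponents_mem)
          fun e _ _ ↦ Finset.prod_nonneg fun p _ ↦ pow_nonneg (hf₀ p p.2) _
    _ = ∏ p : S, ∑ k ∈ Finset.range n, f p ^ k :=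
        Finset.sum_prod_piFinset _ fun (p : S) k ↦ f p ^ k
    _ ≤ ∏ p : S, (1 - f p)⁻¹ :=
        Finset.prod_le_prod
          (fun p _ ↦ Finset.sum_nonneg fun k _ ↦ pow_nonneg (hf₀ p p.2) k) fun p _ ↦ geom_le p
    _ = ∏ p ∈ S, (1 - f p)⁻¹ := Finset.prod_coe_sort S fun p ↦ (1 - f p)⁻¹

end Factored

lemma rpow_neg_le_rpow_sub_mul_rpow_neg {x u σ s : ℝ} (hx : 0 < x) (hxu : x ≤ u) (hσs : σ ≤ s) :
    u ^ (-s) ≤ x ^ (σ - s) * u ^ (-σ) := by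
  have hu : 0 < u := hx.trans_le hxu
  calc u ^ (-s) = u ^ (σ - s) * u ^ (-σ) := by rw [← Real.rpow_add hu]; ring_nf
    _ ≤ x ^ (σ - s) * u ^ (-σ) := by
      gcongr ?_ * _
      exact Real.rpow_le_rpow_of_nonpos hx hxu (sub_nonpos.2 hσs)

theorem summable_and_tsum_factoredElements_rpow_neg_le {α : Type*} [CommMonoidWithZero α]
    [UniqueFactorizationMonoid α] [Subsingleton αˣ] (N : α →* ℝ≥0) {S : Finset α}
    (hS : ∀ p ∈ S, 1 < N p) {x σ s : ℝ} (hx : 0 < x) (hσ : 0 < σ) (hσs : σ ≤ s) :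
    (Summable fun a : {a ∈ factoredElements S | x ≤ N a} ↦ (N a : ℝ) ^ (-s)) ∧
      ∑' a : {a ∈ factoredElements S | x ≤ N a}, (N a : ℝ) ^ (-s) ≤
        x ^ (σ - s) * ∏ p ∈ S, (1 - (N p : ℝ) ^ (-σ))⁻¹ := by
  let f : α →* ℝ := (NNReal.toRealHom : ℝ≥0 →* ℝ).comp ((NNReal.rpowMonoidHom (-σ)).comp N)
  have f_apply (a) : f a = (N a : ℝ) ^ (-σ) := NNReal.coe_rpow _ _
  have f_lt_one (p) (hp : p ∈ S) : f p < 1 :=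
    f_apply p ▸ Real.rpow_lt_one_of_one_lt_of_neg (hS p hp) (neg_neg_of_pos hσ)
  have sum_le (t : Finset {a ∈ factoredElements S | x ≤ N a}) :
      ∑ a ∈ t, (N a : ℝ) ^ (-s) ≤ x ^ (σ - s) * ∏ p ∈ S, (1 - (N p : ℝ) ^ (-σ))⁻¹ :=
    calc ∑ a ∈ t, (N a : ℝ) ^ (-s)
        ≤ ∑ a ∈ t, x ^ (σ - s) * (N a : ℝ) ^ (-σ) :=
          Finset.sum_le_sum fun a _ ↦ rpow_neg_le_rpow_sub_mul_rpow_neg hx a.2.2 hσs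
      _ = x ^ (σ - s) * ∑ a ∈ t.map (.subtype _), f a := by
          simp only [Finset.mul_sum, Finset.sum_map, f_apply, Function.Embedding.subtype_apply]
      _ ≤ x ^ (σ - s) * ∏ p ∈ S, (1 - f p)⁻¹ := by
          gcongr
          refine sum_le_prod_inv_one_sub_of_subset_factoredElements f
            (fun p _ ↦ NNReal.coe_nonneg _) f_lt_one fun a ha ↦ ?_
          exact (Finset.property_of_mem_map_subtype t ha).1
      _ = x ^ (σ - s) * ∏ p ∈ S, (1 - (N p : ℝ) ^ (-σ))⁻¹ := by simp only [f_apply]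
  have nonneg : 0 ≤ fun a : {a ∈ factoredElements S | x ≤ N a} ↦ (N a : ℝ) ^ (-s) :=
    fun a ↦ by positivity
  exact ⟨summable_of_sum_le nonneg sum_le, Real.tsum_le_of_sum_le nonneg sum_le⟩

section Ideals

variable {R : Type*} [CommRing R] [IsDedekindDomain R]

lemma mem_factoredElements_erase_bot {S : Finset (Ideal R)} {I : Ideal R} :
    I ∈ factoredElements (S.erase ⊥) ↔ I ≠ ⊥ ∧ ∀ q : Ideal R, q.IsPrime → q ∣ I → q ∈ S := by
  refine and_congr_right fun hI ↦ forall_congr' fun q ↦ ?_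
  have ne_bot (hqI : q ∣ I) : q ≠ ⊥ := fun hq ↦ hI (zero_dvd_iff.1 (hq ▸ hqI : ⊥ ∣ I))
  constructor
  · exact fun h hq hqI ↦ Finset.mem_of_mem_erase (h (Ideal.prime_of_isPrime (ne_bot hqI) hq) hqI)
  · exact fun h hq hqI ↦ Finset.mem_erase.2 ⟨ne_bot hqI, h (Ideal.isPrime_of_prime hq) hqI⟩

variable [Module.Free ℤ R] [Module.Finite ℤ R]

lemma one_lt_absNorm {I : Ideal R} (hbot : I ≠ ⊥) (htop : I ≠ ⊤) : 1 < Ideal.absNorm I :=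
  Nat.one_lt_iff_ne_zero_and_ne_one.2
    ⟨mt Ideal.absNorm_eq_zero_iff.1 hbot, mt Ideal.absNorm_eq_one_iff.1 htop⟩

theorem rankin_bound_smooth_ideals_general {S : Finset (Ideal R)} (hS : ∀ q ∈ S, q.IsPrime)
    {x σ s : ℝ} (hx : 0 < x) (hσ : 0 < σ) (hσs : σ ≤ s) :
    let F : Ideal R → ℝ := fun I ↦
      if I ≠ ⊥ ∧ x ≤ (Ideal.absNorm I : ℝ) ∧ ∀ q : Ideal R, q.IsPrime → q ∣ I → q ∈ S
      then (Ideal.absNorm I : ℝ) ^ (-s) else 0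
    Summable F ∧
      ∑' I, F I ≤ x ^ (σ - s) * ∏ q ∈ S, (1 - (Ideal.absNorm q : ℝ) ^ (-σ))⁻¹ := by
  intro F
  let N : Ideal R →* ℝ≥0 := (Nat.castRingHom ℝ≥0 : ℕ →* ℝ≥0).comp Ideal.absNorm.toMonoidHom
  have one_lt_N (q) (hq : q ∈ S.erase ⊥) : 1 < N q :=
    Nat.one_lt_cast.2 <| one_lt_absNorm
      (Finset.ne_of_mem_erase hq) (hS q (Finset.mem_of_mem_erase hq)).ne_top
  have indicator_eq : {I ∈ factoredElements (S.erase ⊥) | x ≤ N I}.indicator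
      (fun I ↦ (N I : ℝ) ^ (-s)) = F := by
    ext I
    simp [Set.indicator_apply, mem_factoredElements_erase_bot, F, N, and_right_comm, and_assoc]
  -- The zero ideal may lie in `S`; its factor is `1` because `0 ^ (-σ) = 0` by convention.
  have prod_eq : ∏ q ∈ S.erase ⊥, (1 - (N q : ℝ) ^ (-σ))⁻¹ =
      ∏ q ∈ S, (1 - (Ideal.absNorm q : ℝ) ^ (-σ))⁻¹ :=
    Finset.prod_erase S (by simp [N, Real.zero_rpow (neg_ne_zero.2 hσ.ne')])
  have bound := summable_and_tsum_factoredElements_rpow_neg_le N one_lt_N hx hσ hσs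
  rwa [tsum_subtype _ fun I ↦ (N I : ℝ) ^ (-s), ← Function.comp_def (fun I ↦ (N I : ℝ) ^ (-s)),
    summable_subtype_iff_indicator, indicator_eq, prod_eq] at bound

end Ideals

/-- Rankin's trick for ideals of a number field. -/
theorem rankin_bound_smooth_ideals (K : Type*) [Field K] [NumberField K]
    (x y : ℝ) (hx : 1 ≤ x) (hy : 2 ≤ y)
    (PS : Finset (Ideal (𝓞 K)))
    (hPS : ∀ q : Ideal (𝓞 K), q ∈ PS ↔ q.IsPrime ∧ (Ideal.absNorm q : ℝ) ≤ y) :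
    (∑' I : Ideal (𝓞 K),
        (if I ≠ ⊥ ∧ x ≤ (Ideal.absNorm I : ℝ) ∧
            (∀ q : Ideal (𝓞 K), q.IsPrime → q ∣ I → (Ideal.absNorm q : ℝ) ≤ y)
         then 1 / (Ideal.absNorm I : ℝ) else 0)) ≤
      x ^ (-(1 : ℝ) / 2) * ∏ q ∈ PS, (1 - (Ideal.absNorm q : ℝ) ^ (-(1 : ℝ) / 2))⁻¹ := by
  have bound := (rankin_bound_smooth_ideals_general (σ := 1 / 2) (s := 1)
    (fun q hq ↦ ((hPS q).1 hq).1) (zero_lt_one.trans_le hx) (by norm_num) (by norm_num)).2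
  norm_num +contextual [hPS, Real.rpow_neg_one] at bound ⊢
  exact bound
end
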